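/- arXiv:2510.26088 — 2 statements merged into one kernel-verified Lean document; each statement's English description precedes it below -/
import Mathlib

section
/- Let (s,u) be a solution of problem (P) with initial data (s₀,φ) ∈ W and maximal existence time T_m. Assume u ∈ C^{0,1} on ⋃_{t∈[0,T]} {t}×[0,s(t)] for some T ∈ (0,T_m) (i.e., u is continuous there together with its first spatial derivative). If E(s₀,φ) := (1/2)∫₀^{s₀} |∂_x φ|² dx − φ(0)^{p+1}/(p+1) < (π²/256) · ‖φ‖_{L¹}³ / (s₀ + ‖φ‖_{L¹})⁴, then the solution blows up in finite time, i.e., T_m < ∞. -/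
open Set MeasureTheory Filter Topology Real
open scoped ENNReal

noncomputable section

/-- `(s₀, φ)` belongs to the class `W`: `s₀ ∈ (0,∞)`, `φ` is Lipschitz on `[0,s₀]`,
not identically zero, nonnegative there, and vanishes at `s₀`. -/
def memW (s₀ : ℝ) (φ : ℝ → ℝ) : Prop :=
  0 < s₀ ∧ (∃ K : NNReal, LipschitzOnWith K φ (Icc 0 s₀)) ∧
    (∃ x ∈ Icc 0 s₀, φ x ≠ 0) ∧ (∀ x ∈ Icc 0 s₀, 0 ≤ φ x) ∧ φ s₀ = 0

/-- `(s,u)` is a solution of the one-phase Stefan problem (P) on `(0,T]` (finite `T`)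
with exponent `p` and initial data `(s₀,φ)`. -/
structure IsSolOn (p s₀ : ℝ) (φ : ℝ → ℝ) (T : ℝ) (s : ℝ → ℝ) (u : ℝ → ℝ → ℝ) : Prop where
  T_pos : 0 < T
  s_cont : ContinuousOn s (Icc 0 T)
  s_diff : ∀ t ∈ Ioc 0 T, DifferentiableAt ℝ s t
  s_deriv_cont : ContinuousOn (deriv s) (Ioc 0 T)
  s_pos : ∀ t ∈ Icc 0 T, 0 < s t
  ut_diff : ∀ t ∈ Ioc 0 T, ∀ x ∈ Ioo 0 (s t), DifferentiableAt ℝ (fun τ => u τ x) t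
  ux_diff : ∀ t ∈ Ioc 0 T, ∀ x ∈ Ioo 0 (s t), DifferentiableAt ℝ (u t) x
  uxx_diff : ∀ t ∈ Ioc 0 T, ∀ x ∈ Ioo 0 (s t), DifferentiableAt ℝ (deriv (u t)) x
  ut_cont : ContinuousOn (fun q : ℝ × ℝ => deriv (fun τ => u τ q.2) q.1)
      {q : ℝ × ℝ | q.1 ∈ Ioc 0 T ∧ q.2 ∈ Ioo 0 (s q.1)}
  uxx_cont : ContinuousOn (fun q : ℝ × ℝ => deriv (deriv (u q.1)) q.2)
      {q : ℝ × ℝ | q.1 ∈ Ioc 0 T ∧ q.2 ∈ Ioo 0 (s q.1)}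
  ux_cont : ContinuousOn (fun q : ℝ × ℝ => deriv (u q.1) q.2)
      {q : ℝ × ℝ | q.1 ∈ Ioc 0 T ∧ q.2 ∈ Icc 0 (s q.1)}
  u_cont : ContinuousOn (fun q : ℝ × ℝ => u q.1 q.2)
      {q : ℝ × ℝ | q.1 ∈ Icc 0 T ∧ q.2 ∈ Icc 0 (s q.1)}
  u_nonneg : ∀ t ∈ Icc 0 T, ∀ x ∈ Icc 0 (s t), 0 ≤ u t x
  heat : ∀ t ∈ Ioc 0 T, ∀ x ∈ Ioo 0 (s t),
      deriv (fun τ => u τ x) t = deriv (deriv (u t)) x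
  bc_zero : ∀ t ∈ Ioc 0 T, -deriv (u t) 0 = u t 0 ^ p
  bc_free : ∀ t ∈ Ioc 0 T, u t (s t) = 0
  stefan : ∀ t ∈ Ioc 0 T, deriv s t = -deriv (u t) (s t)
  init : ∀ x ∈ Icc 0 s₀, u 0 x = φ x
  init_s : s 0 = s₀

/-- `(s,u)` is a global-in-time solution of problem (P). -/
def IsGlobalSol (p s₀ : ℝ) (φ : ℝ → ℝ) (s : ℝ → ℝ) (u : ℝ → ℝ → ℝ) : Prop :=
  ∀ T : ℝ, 0 < T → IsSolOn p s₀ φ T s u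

/-- `Tm ∈ (0,∞]` is the maximal existence time of the solution `(s,u)` of (P) with
initial data `(s₀,φ)`: the solution exists on `(0,T]` for every `T < Tm`, and for
`T > Tm` problem (P) admits no solution on `(0,T]`. -/
def IsMaxSol (p s₀ : ℝ) (φ : ℝ → ℝ) (Tm : ℝ≥0∞) (s : ℝ → ℝ) (u : ℝ → ℝ → ℝ) : Prop :=
  0 < Tm ∧
    (∀ T : ℝ, 0 < T → ENNReal.ofReal T < Tm → IsSolOn p s₀ φ T s u) ∧
    (∀ T : ℝ, Tm < ENNReal.ofReal T → ¬∃ σ v, IsSolOn p s₀ φ T σ v)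

/-- The sup norm `‖u(t)‖_{L^∞(0,s(t))}`. -/
def supNorm (s : ℝ → ℝ) (u : ℝ → ℝ → ℝ) (t : ℝ) : ℝ :=
  sSup (u t '' Ioo 0 (s t))

/-- The `L¹` norm `‖u(t)‖_{L¹(0,s(t))}` of the nonnegative function `u(t,·)`. -/
def L1Norm (s : ℝ → ℝ) (u : ℝ → ℝ → ℝ) (t : ℝ) : ℝ :=
  ∫ x in (0:ℝ)..(s t), u t x

/-- The energy `E(s(t),u(t))`. -/
def energy (p : ℝ) (s : ℝ → ℝ) (u : ℝ → ℝ → ℝ) (t : ℝ) : ℝ :=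
  1 / 2 * (∫ x in (0:ℝ)..(s t), (deriv (u t) x) ^ 2) - u t 0 ^ (p + 1) / (p + 1)

/-!
Suppose that the solution were global, and let `m = ‖φ‖_{L¹}` and `L = s₀ + m`.

Along the flow the energy dissipates at rate `½ (s')³ + ∫ u_t²`. Since `u_t` is only known to be
continuous inside the domain, this is established as a bound on the lower right Dini derivative,
tested against `u`: for every `θ` the rate is at least `½ (s')³ + 2 θ I - θ² Y`, where `Y = ∫ u²`
and `Y' = 2 I`.

* The choice `θ = I / Y` gives `E' ≤ -I² / Y`, while `I ≥ -(p + 1) E`. If the energy became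
  negative, Levine's concavity argument would make `Y` blow up in finite time; hence `E ≥ 0` at all
  times.
* The backward caloric function `z = 1 - 2 exp (k² (t - T)) cos (k x)` with `k = π / (3 L)` and
  `T = 4 L² / π` is at most `1` and, as long as the free boundary has not passed `L`, satisfies
  `z ≥ ½` at time `0` and `z ≤ 0` at time `T`. Testing the equation with (a smooth approximation of)
  its positive part shows that the free boundary has advanced by at least `m / 2` at time `T`.

With `θ = 0` and Jensen's inequality for the cube of the speed,
`E(0) ≥ (m / 2)³ / (2 T²) = π² m³ / (256 L⁴)`.
-/

/-! ### Space-time integral identities -/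

section DivergenceIdentity

variable {E : Type*} [NormedAddCommGroup E] [NormedSpace ℝ E]

lemma continuous_intervalIntegral_of_continuous {X : Type*} [TopologicalSpace X]
    [FirstCountableTopology X] [LocallyCompactSpace X] {f : X → ℝ → E} {a b : X → ℝ}
    (hf : Continuous fun q : X × ℝ => f q.1 q.2) (ha : Continuous a) (hb : Continuous b) :
    Continuous fun y => ∫ x in a y..b y, f y x := by
  have hint (y : X) (c d : ℝ) : IntervalIntegrable (f y) volume c d :=
    (hf.comp (Continuous.prodMk_right y)).intervalIntegrable c d
  have hsplit (y : X) : ∫ x in a y..b y, f y x =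
      (∫ x in (0 : ℝ)..b y, f y x) - ∫ x in (0 : ℝ)..a y, f y x :=
    (intervalIntegral.integral_interval_sub_left (hint y _ _) (hint y _ _)).symm
  simp_rw [hsplit]
  exact (intervalIntegral.continuous_parametric_intervalIntegral_of_continuous hf hb).sub
    (intervalIntegral.continuous_parametric_intervalIntegral_of_continuous hf ha)

variable [CompleteSpace E] {f ft G R : ℝ → ℝ → E} {a b t₁ t₂ : ℝ}

lemma integral_sub_eq_integral_integral_of_hasDerivAt (ht : t₁ ≤ t₂) (hab : a ≤ b)
    (hf : ∀ t ∈ Icc t₁ t₂, ∀ x ∈ Icc a b, HasDerivAt (fun τ => f τ x) (ft t x) t)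
    (hft : ContinuousOn (fun q : ℝ × ℝ => ft q.1 q.2) (Icc t₁ t₂ ×ˢ Icc a b)) :
    ∫ x in a..b, (f t₂ x - f t₁ x) = ∫ t in t₁..t₂, ∫ x in a..b, ft t x := by
  have increment_eq : ∀ x ∈ uIcc a b, f t₂ x - f t₁ x = ∫ t in t₁..t₂, ft t x := by
    intro x hx
    rw [uIcc_of_le hab] at hx
    refine (intervalIntegral.integral_eq_sub_of_hasDerivAt (f := fun τ => f τ x)
      (fun t h => hf t (uIcc_of_le ht ▸ h) x hx) ?_).symm
    exact (hft.comp (Continuous.prodMk_left x).continuousOn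
      fun t h => ⟨h, hx⟩).intervalIntegrable_of_Icc ht
  rw [intervalIntegral.integral_congr increment_eq]
  refine intervalIntegral_intervalIntegral_swap ?_
  have hint : IntegrableOn (fun q : ℝ × ℝ => ft q.2 q.1) (Icc a b ×ˢ Icc t₁ t₂) :=
    (hft.comp continuous_swap.continuousOn fun q hq => ⟨hq.2, hq.1⟩).integrableOn_compact
      (isCompact_Icc.prod isCompact_Icc)
  rw [uIoc_of_le hab, uIoc_of_le ht]
  exact hint.mono_set (prod_mono Ioc_subset_Icc_self Ioc_subset_Icc_self)

lemma integral_sub_eq_integral_flux_add_source_of_Icc (ht : t₁ ≤ t₂) (hab : a ≤ b)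
    (hR : ∀ t, Continuous (R t))
    (hf : ∀ t ∈ Icc t₁ t₂, ∀ x ∈ Icc a b, HasDerivAt (fun τ => f τ x) (ft t x) t)
    (hG : ∀ t ∈ Icc t₁ t₂, ∀ x ∈ Icc a b, HasDerivAt (G t) (ft t x - R t x) x)
    (hft : ContinuousOn (fun q : ℝ × ℝ => ft q.1 q.2) (Icc t₁ t₂ ×ˢ Icc a b)) :
    ∫ x in a..b, (f t₂ x - f t₁ x) =
      ∫ t in t₁..t₂, (G t b - G t a + ∫ x in a..b, R t x) := by
  rw [integral_sub_eq_integral_integral_of_hasDerivAt ht hab hf hft]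
  refine intervalIntegral.integral_congr fun t h => ?_
  rw [uIcc_of_le ht] at h
  have hft_t : ContinuousOn (ft t) (Icc a b) :=
    hft.comp (Continuous.prodMk_right t).continuousOn fun x hx => ⟨h, hx⟩
  have hint : IntervalIntegrable (fun x => ft t x - R t x) volume a b :=
    (hft_t.sub (hR t).continuousOn).intervalIntegrable_of_Icc hab
  have flux_eq : ∫ x in a..b, (ft t x - R t x) = G t b - G t a :=
    intervalIntegral.integral_eq_sub_of_hasDerivAt
      (fun x hx => hG t h x (uIcc_of_le hab ▸ hx)) hint
  simp only [← flux_eq, ← intervalIntegral.integral_add hint ((hR t).intervalIntegrable a b),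
    sub_add_cancel]

-- The derivatives may be singular at `x = a` and `x = b`: shrink the rectangle and pass to
-- the limit.
lemma integral_sub_eq_integral_flux_add_source (hfc : ∀ t, Continuous (f t))
    (hGc : Continuous fun q : ℝ × ℝ => G q.1 q.2) (hRc : Continuous fun q : ℝ × ℝ => R q.1 q.2)
    (ht : t₁ ≤ t₂) (hab : a < b)
    (hf : ∀ t ∈ Icc t₁ t₂, ∀ x ∈ Ioo a b, HasDerivAt (fun τ => f τ x) (ft t x) t)
    (hG : ∀ t ∈ Icc t₁ t₂, ∀ x ∈ Ioo a b, HasDerivAt (G t) (ft t x - R t x) x)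
    (hft : ContinuousOn (fun q : ℝ × ℝ => ft q.1 q.2) (Icc t₁ t₂ ×ˢ Ioo a b)) :
    ∫ x in a..b, (f t₂ x - f t₁ x) =
      ∫ t in t₁..t₂, (G t b - G t a + ∫ x in a..b, R t x) := by
  set lhs : ℝ → E := fun e => ∫ x in a + e..b - e, (f t₂ x - f t₁ x) with hlhs
  set rhs : ℝ → E := fun e =>
    ∫ t in t₁..t₂, (G t (b - e) - G t (a + e) + ∫ x in a + e..b - e, R t x) with hrhs
  have eventually_eq : lhs =ᶠ[𝓝[>] 0] rhs := by
    filter_upwards [Ioo_mem_nhdsGT (half_pos (sub_pos.2 hab))] with e he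
    have hsub : Icc (a + e) (b - e) ⊆ Ioo a b :=
      Icc_subset_Ioo (by linarith [he.1]) (by linarith [he.1])
    exact integral_sub_eq_integral_flux_add_source_of_Icc ht (by linarith [he.2])
      (fun t => hRc.comp (Continuous.prodMk_right t)) (fun t h x hx => hf t h x (hsub hx))
      (fun t h x hx => hG t h x (hsub hx)) (hft.mono (prod_mono_right hsub))
  have lhs_cont : Continuous lhs :=
    continuous_intervalIntegral_of_continuous
      (((hfc t₂).comp continuous_snd).sub ((hfc t₁).comp continuous_snd)) (by fun_prop)
      (by fun_prop)
  have source_cont : Continuous fun q : ℝ × ℝ => ∫ x in a + q.1..b - q.1, R q.2 x :=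
    continuous_intervalIntegral_of_continuous
      (hRc.comp ((continuous_snd.comp continuous_fst).prodMk continuous_snd)) (by fun_prop)
      (by fun_prop)
  have rhs_cont : Continuous rhs :=
    continuous_intervalIntegral_of_continuous (by fun_prop) continuous_const continuous_const
  have h := tendsto_nhds_unique
    (((lhs_cont.tendsto 0).mono_left nhdsWithin_le_nhds).congr' eventually_eq)
    ((rhs_cont.tendsto 0).mono_left nhdsWithin_le_nhds)
  simpa only [hlhs, hrhs, add_zero, sub_zero] using h

lemma hasDerivWithinAt_integral_flux_add_source {t : ℝ} (hfc : ∀ t, Continuous (f t))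
    (hGc : Continuous fun q : ℝ × ℝ => G q.1 q.2) (hRc : Continuous fun q : ℝ × ℝ => R q.1 q.2)
    (hab : a < b)
    (hf : ∀ τ ∈ Ici t, ∀ x ∈ Ioo a b, HasDerivAt (fun τ => f τ x) (ft τ x) τ)
    (hG : ∀ τ ∈ Ici t, ∀ x ∈ Ioo a b, HasDerivAt (G τ) (ft τ x - R τ x) x)
    (hft : ContinuousOn (fun q : ℝ × ℝ => ft q.1 q.2) (Ici t ×ˢ Ioo a b)) :
    HasDerivWithinAt (fun τ => ∫ x in a..b, f τ x) (G t b - G t a + ∫ x in a..b, R t x)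
      (Ici t) t := by
  have rate_cont : Continuous fun τ => G τ b - G τ a + ∫ x in a..b, R τ x :=
    Continuous.add (by fun_prop)
      (continuous_intervalIntegral_of_continuous hRc continuous_const continuous_const)
  have hderiv := ((intervalIntegral.integral_hasDerivAt_right (a := t) (b := t)
    (rate_cont.intervalIntegrable _ _) rate_cont.stronglyMeasurable.stronglyMeasurableAtFilter
    rate_cont.continuousAt).const_add (∫ x in a..b, f t x)).hasDerivWithinAt (s := Ici t)
  refine hderiv.congr (fun τ hτ => ?_) (by simp)
  have hsub : Icc t τ ⊆ Ici t := Icc_subset_Ici_self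
  rw [← integral_sub_eq_integral_flux_add_source hfc hGc hRc hτ hab (fun y hy => hf y (hsub hy))
      (fun y hy => hG y (hsub hy)) (hft.mono (prod_mono_left hsub)),
    intervalIntegral.integral_sub ((hfc τ).intervalIntegrable _ _)
      ((hfc t).intervalIntegrable _ _), add_sub_cancel]

end DivergenceIdentity

lemma hasDerivAt_integral_moving_endpoint {s : ℝ → ℝ} {g : ℝ → ℝ → ℝ} {t s' : ℝ}
    (hs : Continuous s) (hg : Continuous fun q : ℝ × ℝ => g q.1 q.2) (hs' : HasDerivAt s s' t) :
    HasDerivAt (fun τ => ∫ x in s t..s τ, g τ x) (g t (s t) * s') t := by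
  set mean : ℝ → ℝ := fun τ => ∫ ξ in (0 : ℝ)..1, g τ (s t + (s τ - s t) * ξ) with hmean
  have integral_eq (τ : ℝ) : ∫ x in s t..s τ, g τ x = mean τ * (s τ - s t) := by
    have h := intervalIntegral.smul_integral_comp_add_mul (a := 0) (b := 1) (g τ) (s τ - s t) (s t)
    rw [mul_comm]
    simpa only [mul_zero, add_zero, mul_one, add_sub_cancel, smul_eq_mul] using h.symm
  have mean_cont : Continuous mean :=
    continuous_intervalIntegral_of_continuous (by fun_prop) continuous_const continuous_const
  have mean_self : mean t = g t (s t) := by simp [hmean]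
  rw [hasDerivAt_iff_tendsto_slope] at hs' ⊢
  rw [← mean_self]
  refine (((mean_cont.tendsto t).mono_left nhdsWithin_le_nhds).mul hs').congr fun τ => ?_
  simp only [slope_def_field, integral_eq, sub_self, mul_zero, sub_zero, mul_div_assoc]

lemma hasDerivWithinAt_integral_moving_boundary {f ft G R : ℝ → ℝ → ℝ} {s : ℝ → ℝ} {a t s' : ℝ}
    (hfc : Continuous fun q : ℝ × ℝ => f q.1 q.2)
    (hGc : Continuous fun q : ℝ × ℝ => G q.1 q.2) (hRc : Continuous fun q : ℝ × ℝ => R q.1 q.2)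
    (hs : Continuous s) (hs' : HasDerivAt s s' t) (has : a < s t) (hft_bdry : f t (s t) = 0)
    (hf : ∀ τ ∈ Ici t, ∀ x ∈ Ioo a (s t), HasDerivAt (fun τ => f τ x) (ft τ x) τ)
    (hG : ∀ τ ∈ Ici t, ∀ x ∈ Ioo a (s t), HasDerivAt (G τ) (ft τ x - R τ x) x)
    (hft : ContinuousOn (fun q : ℝ × ℝ => ft q.1 q.2) (Ici t ×ˢ Ioo a (s t))) :
    HasDerivWithinAt (fun τ => ∫ x in a..s τ, f τ x)
      (G t (s t) - G t a + ∫ x in a..s t, R t x) (Ici t) t := by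
  have hfc' (τ : ℝ) : Continuous (f τ) := hfc.comp (Continuous.prodMk_right τ)
  have fixed_part := hasDerivWithinAt_integral_flux_add_source hfc' hGc hRc has hf hG hft
  have moving_part := (hasDerivAt_integral_moving_endpoint hs hfc hs').hasDerivWithinAt (s := Ici t)
  rw [hft_bdry, zero_mul] at moving_part
  simpa only [add_zero, Pi.add_def, intervalIntegral.integral_add_adjacent_intervals
    ((hfc' _).intervalIntegrable a (s t)) ((hfc' _).intervalIntegrable (s t) _)]
    using fixed_part.add moving_part

/-! ### One-sided derivatives -/

lemma eventually_add_mul_lt_of_hasDerivWithinAt_Ici {f : ℝ → ℝ} {f' c t : ℝ}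
    (hf : HasDerivWithinAt f f' (Ici t) t) (hc : c < f') :
    ∀ᶠ τ in 𝓝[>] t, f t + c * (τ - t) < f τ := by
  have hslope := (hasDerivWithinAt_iff_tendsto_slope' self_notMem_Ioi).1 hf.Ioi_of_Ici
  filter_upwards [hslope.eventually_const_lt hc, self_mem_nhdsWithin] with τ hτ htτ
  rw [slope_def_field, lt_div_iff₀ (sub_pos.2 htτ)] at hτ
  linarith

lemma frequently_mul_lt_of_eventually_lt_integral {D : ℝ → ℝ} {k t : ℝ} (hD : Continuous D)
    (hK : ∀ᶠ τ in 𝓝[>] t, k / 2 * (τ - t) ^ 2 < ∫ y in t..τ, D y) :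
    ∃ᶠ τ in 𝓝[>] t, k * (τ - t) < D τ := by
  intro hle
  obtain ⟨r, hr, hle_r⟩ := mem_nhdsGT_iff_exists_Ioo_subset.1 hle
  obtain ⟨τ, hτK, hτ⟩ := (hK.and (Ioo_mem_nhdsGT hr)).exists
  have integral_le : ∫ y in t..τ, D y ≤ ∫ y in t..τ, k * (y - t) :=
    intervalIntegral.integral_mono_on_of_le_Ioo hτ.1.le (hD.intervalIntegrable _ _)
      (Continuous.intervalIntegrable (by fun_prop) _ _)
      fun y hy => not_lt.1 (hle_r ⟨hy.1, hy.2.trans hτ.2⟩)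
  have integral_eq : ∫ y in t..τ, k * (y - t) = k / 2 * (τ - t) ^ 2 := by
    rw [intervalIntegral.integral_const_mul,
      intervalIntegral.integral_comp_sub_right (fun y => y) t, integral_id]
    ring
  linarith

lemma antitoneOn_sub_of_liminf_slope_right_le {f B B' : ℝ → ℝ} {a b : ℝ}
    (hf : ContinuousOn f (Icc a b)) (hB : ContinuousOn B (Icc a b))
    (hB' : ∀ t ∈ Ioo a b, HasDerivWithinAt B (B' t) (Ici t) t)
    (hslope : ∀ t ∈ Ioo a b, ∀ r, B' t < r → ∃ᶠ τ in 𝓝[>] t, slope f t τ < r) :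
    AntitoneOn (fun t => f t - B t) (Icc a b) := by
  have le_of_left_lt : ∀ x ∈ Ioc a b, ∀ y ∈ Icc a b, x ≤ y → f y - B y ≤ f x - B x := by
    intro x hx y hy hxy
    have hsub : Icc x y ⊆ Icc a b := Icc_subset_Icc hx.1.le hy.2
    have hsub' : Ico x y ⊆ Ioo a b := fun z hz => ⟨hx.1.trans_le hz.1, hz.2.trans_le hy.2⟩
    have h := image_le_of_liminf_slope_right_le_deriv_boundary (B := fun t => B t + (f x - B x))
      (hf.mono hsub) (by simp) ((hB.mono hsub).add_const _)
      (fun z hz => (hB' z (hsub' hz)).add_const _) (fun z hz => hslope z (hsub' hz))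
      (right_mem_Icc.2 hxy)
    linarith
  intro x hx y hy hxy
  rcases hx.1.eq_or_lt with rfl | hax
  · rcases hxy.eq_or_lt with rfl | hay
    · rfl
    have hcont : ContinuousWithinAt (fun t => f t - B t) (Ioc a y) a :=
      ((hf.sub hB) a hx).mono (Ioc_subset_Icc_self.trans (Icc_subset_Icc_right hy.2))
    rw [ContinuousWithinAt, nhdsWithin_Ioc_eq_nhdsGT hay] at hcont
    refine ge_of_tendsto hcont ?_
    filter_upwards [Ioo_mem_nhdsGT hay] with z hz
    exact le_of_left_lt z ⟨hz.1, hz.2.le.trans hy.2⟩ y hy hz.2.le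
  · exact le_of_left_lt x ⟨hax, hx.2⟩ y hy hxy

/-! ### Real inequalities -/

lemma neg_mul_two_mul_mul_le {ε w : ℝ} (hε : 0 < ε) (hw₀ : 0 ≤ w) (hw₁ : w ≤ 1) (x y : ℝ) :
    -(w * (2 * x * y)) ≤ ε * y ^ 2 + x ^ 2 / ε := by
  have hsq : ε * y ^ 2 + 2 * w * x * y + x ^ 2 / ε =
      ε * (y + w * x / ε) ^ 2 + (1 - w ^ 2) * (x ^ 2 / ε) := by
    field_simp
    ring
  have hw : 0 ≤ 1 - w ^ 2 := by nlinarith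
  have : 0 ≤ ε * (y + w * x / ε) ^ 2 + (1 - w ^ 2) * (x ^ 2 / ε) := by positivity
  linarith

lemma sq_left_le_mul_integral_deriv_sq_add {f f' : ℝ → ℝ} {a b ε : ℝ} (hab : a < b) (hε : 0 < ε)
    (hf : ContinuousOn f (Icc a b)) (hf'c : ContinuousOn f' (Icc a b))
    (hf' : ∀ x ∈ Ioo a b, HasDerivAt f (f' x) x) :
    f a ^ 2 ≤ ε * (∫ x in a..b, f' x ^ 2) + (1 / (b - a) + 1 / ε) * ∫ x in a..b, f x ^ 2 := by
  have hba : 0 < b - a := sub_pos.2 hab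
  have weighted_ftc : -((b - b) / (b - a) * f b ^ 2) - -((b - a) / (b - a) * f a ^ 2) ≤
      ∫ x in a..b, (ε * f' x ^ 2 + (1 / (b - a) + 1 / ε) * f x ^ 2) := by
    refine intervalIntegral.sub_le_integral_of_hasDeriv_right_of_le hab.le
      (g := fun x => -((b - x) / (b - a) * f x ^ 2))
      (g' := fun x => f x ^ 2 / (b - a) - (b - x) / (b - a) * (2 * f x * f' x))
      (by fun_prop) (fun x hx => ?_)
      (ContinuousOn.integrableOn_Icc (by fun_prop)) (fun x hx => ?_)
    · have hweight : HasDerivAt (fun x => (b - x) / (b - a)) (-1 / (b - a)) x :=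
        ((hasDerivAt_id x).const_sub b).div_const _
      refine ((hweight.mul ((hf' x hx).pow 2)).neg.congr_deriv ?_).hasDerivWithinAt
      simp only [Nat.cast_ofNat, Nat.add_one_sub_one, pow_one, Pi.pow_apply]
      ring
    · have hw0 : 0 ≤ (b - x) / (b - a) := div_nonneg (by linarith [hx.2]) hba.le
      have hw1 : (b - x) / (b - a) ≤ 1 := (div_le_one hba).2 (by linarith [hx.1])
      linarith [neg_mul_two_mul_mul_le hε hw0 hw1 (f x) (f' x),
        show (1 / (b - a) + 1 / ε) * f x ^ 2 = f x ^ 2 / (b - a) + f x ^ 2 / ε by ring]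
  have hint (g : ℝ → ℝ) (c : ℝ) (hg : ContinuousOn g (Icc a b)) :
      IntervalIntegrable (fun x => c * g x ^ 2) volume a b :=
    ContinuousOn.intervalIntegrable_of_Icc hab.le (by fun_prop)
  rw [intervalIntegral.integral_add (hint _ _ hf'c) (hint _ _ hf),
    intervalIntegral.integral_const_mul, intervalIntegral.integral_const_mul, sub_self, zero_div,
    zero_mul, div_self hba.ne'] at weighted_ftc
  linarith

lemma rpow_mul_sub_le_rpow_add_one_div {p x y : ℝ} (hp : 0 < p) (hx : 0 ≤ x) (hy : 0 ≤ y) :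
    x ^ p * (y - x) ≤ y ^ (p + 1) / (p + 1) - x ^ (p + 1) / (p + 1) := by
  have conj : (p + 1).HolderConjugate ((p + 1) / p) := by
    rw [Real.holderConjugate_iff]
    refine ⟨by linarith, ?_⟩
    field_simp
    ring
  have young := Real.young_inequality_of_nonneg hy (Real.rpow_nonneg hx p) conj
  rw [← Real.rpow_mul hx, mul_div_cancel₀ _ hp.ne'] at young
  have hmul : x ^ (p + 1) = x ^ p * x := Real.rpow_add_one' hx (by linarith)
  have hdiv : x ^ (p + 1) / ((p + 1) / p) = x ^ (p + 1) - x ^ (p + 1) / (p + 1) := by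
    field_simp
    ring
  linarith

lemma rpow_sub_rpow_mul_sub_le {p R x y : ℝ} (hp : 1 ≤ p) (hx : x ∈ Icc 0 R) (hy : y ∈ Icc 0 R) :
    (x ^ p - y ^ p) * (x - y) ≤ p * R ^ (p - 1) * (x - y) ^ 2 := by
  have lipschitz : ‖x ^ p - y ^ p‖ ≤ p * R ^ (p - 1) * ‖x - y‖ := by
    refine Convex.norm_image_sub_le_of_norm_hasDerivWithin_le (f := fun z : ℝ => z ^ p)
      (f' := fun z => p * z ^ (p - 1)) (s := Icc 0 R)
      (fun z _ => (Real.hasDerivAt_rpow_const (Or.inr hp)).hasDerivWithinAt)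
      (fun z hz => ?_) (convex_Icc _ _) hy hx
    rw [Real.norm_of_nonneg (mul_nonneg (by linarith) (Real.rpow_nonneg hz.1 _))]
    gcongr
    exacts [hz.1, hz.2]
  calc (x ^ p - y ^ p) * (x - y) ≤ |x ^ p - y ^ p| * |x - y| :=
        (le_abs_self _).trans_eq (abs_mul _ _)
    _ ≤ p * R ^ (p - 1) * |x - y| * |x - y| := by gcongr; exact lipschitz
    _ = p * R ^ (p - 1) * (x - y) ^ 2 := by rw [mul_assoc, ← sq, sq_abs]

lemma rpow_mul_sub_sub_le_rpow_add_one_div {p R x y : ℝ} (hp : 1 ≤ p) (hx : x ∈ Icc 0 R)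
    (hy : y ∈ Icc 0 R) :
    y ^ p * (y - x) - p * R ^ (p - 1) * (y - x) ^ 2 ≤
      y ^ (p + 1) / (p + 1) - x ^ (p + 1) / (p + 1) := by
  have convex := rpow_mul_sub_le_rpow_add_one_div (by linarith : 0 < p) hx.1 hy.1
  have lipschitz := rpow_sub_rpow_mul_sub_le hp hy hx
  linarith

/-! ### Differential inequalities forcing blow-up -/

section BlowUp

variable {E I Y Y' : ℝ → ℝ} {t₀ : ℝ}

lemma exists_right_deriv_lt_mul_rpow {c q : ℝ} (hc : 0 < c) (hq : 1 < q)
    (hYc : ContinuousOn Y (Ici t₀)) (hYpos : ∀ t ∈ Ici t₀, 0 < Y t)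
    (hY' : ∀ t ∈ Ici t₀, HasDerivWithinAt Y (Y' t) (Ici t) t) :
    ∃ t ∈ Ici t₀, Y' t < c * Y t ^ q := by
  by_contra! hge
  set κ := (q - 1) * c
  have hκ : 0 < κ := mul_pos (by linarith) hc
  have rpow_le : ∀ t ∈ Ici t₀, Y t ^ (1 - q) ≤ Y t₀ ^ (1 - q) - κ * (t - t₀) := by
    intro t ht
    have hsub : Icc t₀ t ⊆ Ici t₀ := Icc_subset_Ici_self
    refine image_le_of_deriv_right_le_deriv_boundary (a := t₀) (b := t)
      (f := fun t => Y t ^ (1 - q)) (f' := fun t => Y' t * (1 - q) * Y t ^ (1 - q - 1))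
      (B := fun t => Y t₀ ^ (1 - q) - κ * (t - t₀)) (B' := fun _ => -κ)
      ((hYc.mono hsub).rpow_const fun x hx => Or.inl (hYpos x (hsub hx)).ne')
      (fun x hx => (hY' x hx.1).rpow_const (Or.inl (hYpos x hx.1).ne')) (by simp) (by fun_prop)
      (fun x _ => ?_) (fun x hx => ?_) (right_mem_Icc.2 ht)
    · simpa using
        ((((hasDerivAt_id x).sub_const t₀).const_mul κ).const_sub (Y t₀ ^ (1 - q))).hasDerivWithinAt
    · have hYq : 0 < Y x ^ q := Real.rpow_pos_of_pos (hYpos x hx.1) q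
      have hinv : Y x ^ (1 - q - 1) = (Y x ^ q)⁻¹ := by
        rw [← Real.rpow_neg (hYpos x hx.1).le]
        congr 1
        ring
      have hc_le : c ≤ Y' x * (Y x ^ q)⁻¹ := by
        rw [← div_eq_mul_inv, le_div_iff₀ hYq]
        exact hge x hx.1
      rw [hinv, mul_right_comm]
      linarith [mul_le_mul_of_nonneg_left hc_le (sub_pos.2 hq).le]
  have ht : t₀ + Y t₀ ^ (1 - q) / κ ∈ Ici t₀ :=
    le_add_of_nonneg_right (div_nonneg (Real.rpow_nonneg (hYpos t₀ self_mem_Ici).le _) hκ.le)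
  have hle := rpow_le _ ht
  rw [add_sub_cancel_left, mul_div_cancel₀ _ hκ.ne', sub_self] at hle
  exact hle.not_gt (Real.rpow_pos_of_pos (hYpos _ ht) _)

variable {a : ℝ}

-- `E` cannot cross `-C Y ^ q` from below: at a contact point the slope of `E` is at most
-- `-I ^ 2 / Y`, while that of `-C Y ^ q` is `-2 q (C Y ^ q) I / Y = 2 q E I / Y`, and
-- `-2 q E < -a E ≤ I`.
lemma le_neg_mul_rpow_of_liminf_slope_le_neg_sq_div (ha : 2 < a) (hEc : ContinuousOn E (Ici t₀))
    (hYc : ContinuousOn Y (Ici t₀)) (hE : ∀ t ∈ Ici t₀, E t < 0) (hY : ∀ t ∈ Ici t₀, 0 < Y t)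
    (hY' : ∀ t ∈ Ici t₀, HasDerivWithinAt Y (2 * I t) (Ici t) t)
    (hI : ∀ t ∈ Ici t₀, -(a * E t) ≤ I t)
    (hslope : ∀ t ∈ Ici t₀, ∀ r, -(I t ^ 2 / Y t) < r → ∃ᶠ τ in 𝓝[>] t, slope E t τ < r)
    {t : ℝ} (ht : t ∈ Ici t₀) :
    E t ≤ -(-E t₀ / Y t₀ ^ ((a + 2) / 4) * Y t ^ ((a + 2) / 4)) := by
  set q := (a + 2) / 4 with hq
  set C := -E t₀ / Y t₀ ^ q with hC
  have hsub : Icc t₀ t ⊆ Ici t₀ := Icc_subset_Ici_self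
  refine image_le_of_liminf_slope_right_lt_deriv_boundary' (a := t₀) (b := t)
    (f' := fun t => -(I t ^ 2 / Y t)) (B := fun t => -(C * Y t ^ q))
    (B' := fun t => -(C * (2 * I t * q * Y t ^ (q - 1)))) (hEc.mono hsub)
    (fun x hx => hslope x hx.1) ?_
    (((hYc.mono hsub).rpow_const fun x hx => Or.inl (hY x (hsub hx)).ne').const_mul C).neg
    (fun x hx => (((hY' x hx.1).rpow_const (Or.inl (hY x hx.1).ne')).const_mul C).neg)
    (fun x hx hcontact => ?_) (right_mem_Icc.2 ht)
  · simp only [hC]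
    rw [div_mul_cancel₀ _ (Real.rpow_pos_of_pos (hY t₀ self_mem_Ici) q).ne', neg_neg]
  · have hYx := hY x hx.1
    have hEx := hE x hx.1
    have hIx := hI x hx.1
    have hcoeff : C * Y x ^ q * (2 * q) < I x := by
      rw [show C * Y x ^ q = -E x by rw [hcontact, neg_neg], hq]
      nlinarith
    have hIpos : 0 < I x := by nlinarith
    rw [Real.rpow_sub_one hYx.ne', neg_lt_neg_iff]
    calc C * (2 * I x * q * (Y x ^ q / Y x)) = C * Y x ^ q * (2 * q) * (I x / Y x) := by ring
      _ < I x * (I x / Y x) := by gcongr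
      _ = I x ^ 2 / Y x := by ring

lemma exists_nonneg_of_liminf_slope_le_neg_sq_div (ha : 2 < a) (hEc : ContinuousOn E (Ici t₀))
    (hYc : ContinuousOn Y (Ici t₀)) (hY : ∀ t ∈ Ici t₀, E t < 0 → 0 < Y t)
    (hY' : ∀ t ∈ Ici t₀, HasDerivWithinAt Y (2 * I t) (Ici t) t)
    (hI : ∀ t ∈ Ici t₀, -(a * E t) ≤ I t)
    (hslope : ∀ t ∈ Ici t₀, ∀ r, -(I t ^ 2 / Y t) < r → ∃ᶠ τ in 𝓝[>] t, slope E t τ < r) :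
    ∃ t ∈ Ici t₀, 0 ≤ E t := by
  by_contra! hE
  have hYpos : ∀ t ∈ Ici t₀, 0 < Y t := fun t ht => hY t ht (hE t ht)
  set q := (a + 2) / 4 with hq
  set C := -E t₀ / Y t₀ ^ q
  have hCpos : 0 < C := div_pos (neg_pos.2 (hE t₀ self_mem_Ici))
    (Real.rpow_pos_of_pos (hYpos t₀ self_mem_Ici) q)
  obtain ⟨t, ht, hlt⟩ := exists_right_deriv_lt_mul_rpow (c := 2 * (a * C)) (q := q)
    (by positivity) (by linarith) hYc hYpos hY'
  have hEle := le_neg_mul_rpow_of_liminf_slope_le_neg_sq_div ha hEc hYc hE hYpos hY' hI hslope ht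
  have hmul : a * E t ≤ a * -(C * Y t ^ q) := mul_le_mul_of_nonneg_left hEle (by linarith)
  linarith [hI t ht]

end BlowUp

/-! ### A smooth nonnegative backward caloric subsolution -/

/-- A smooth convex approximation, for small `e > 0`, of the positive part `max z 0`. -/
def smoothPosPart (e z : ℝ) : ℝ := (z + √(z ^ 2 + e ^ 2)) / 2

/-- The derivative of `smoothPosPart e`. -/
def smoothPosPartDeriv (e z : ℝ) : ℝ := (1 + z / √(z ^ 2 + e ^ 2)) / 2

/-- The second derivative of `smoothPosPart e`. -/
def smoothPosPartDeriv₂ (e z : ℝ) : ℝ := e ^ 2 / (2 * √(z ^ 2 + e ^ 2) ^ 3)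

section SmoothPosPart

variable {e : ℝ}

lemma sqrt_sq_add_sq_pos (he : 0 < e) (z : ℝ) : 0 < √(z ^ 2 + e ^ 2) :=
  Real.sqrt_pos.2 (by positivity)

lemma hasDerivAt_sqrt_sq_add_sq (he : 0 < e) (z : ℝ) :
    HasDerivAt (fun z => √(z ^ 2 + e ^ 2)) (z / √(z ^ 2 + e ^ 2)) z := by
  have hpos : 0 < z ^ 2 + e ^ 2 := by positivity
  refine ((((hasDerivAt_id z).fun_pow 2).add_const (e ^ 2)).sqrt hpos.ne').congr_deriv ?_
  simp only [id, Nat.cast_ofNat, Nat.add_one_sub_one, pow_one, mul_one]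
  exact mul_div_mul_left _ _ two_ne_zero

lemma hasDerivAt_smoothPosPart (he : 0 < e) (z : ℝ) :
    HasDerivAt (smoothPosPart e) (smoothPosPartDeriv e z) z :=
  ((hasDerivAt_id z).add (hasDerivAt_sqrt_sq_add_sq he z)).div_const 2

lemma hasDerivAt_smoothPosPartDeriv (he : 0 < e) (z : ℝ) :
    HasDerivAt (smoothPosPartDeriv e) (smoothPosPartDeriv₂ e z) z := by
  have hpos := sqrt_sq_add_sq_pos he z
  have hsq : √(z ^ 2 + e ^ 2) ^ 2 = z ^ 2 + e ^ 2 := Real.sq_sqrt (by positivity)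
  refine ((((hasDerivAt_id z).div (hasDerivAt_sqrt_sq_add_sq he z) hpos.ne').const_add 1).div_const
    2).congr_deriv ?_
  simp only [id, smoothPosPartDeriv₂]
  field_simp
  rw [hsq]
  ring

@[fun_prop]
lemma continuous_smoothPosPart : Continuous (smoothPosPart e) := by
  unfold smoothPosPart
  fun_prop

lemma continuous_smoothPosPartDeriv (he : 0 < e) : Continuous (smoothPosPartDeriv e) :=
  continuous_iff_continuousAt.2 fun z => (hasDerivAt_smoothPosPartDeriv he z).continuousAt

lemma continuous_smoothPosPartDeriv₂ (he : 0 < e) : Continuous (smoothPosPartDeriv₂ e) :=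
  Continuous.div continuous_const (by fun_prop) fun z =>
    (mul_pos two_pos (pow_pos (sqrt_sq_add_sq_pos he z) 3)).ne'

lemma smoothPosPartDeriv₂_nonneg (e z : ℝ) : 0 ≤ smoothPosPartDeriv₂ e z := by
  unfold smoothPosPartDeriv₂
  positivity

lemma smoothPosPart_nonneg (e z : ℝ) : 0 ≤ smoothPosPart e z := by
  have : -z ≤ √(z ^ 2 + e ^ 2) := Real.le_sqrt_of_sq_le (by nlinarith)
  unfold smoothPosPart
  linarith

lemma le_smoothPosPart (e z : ℝ) : z ≤ smoothPosPart e z := by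
  have : z ≤ √(z ^ 2 + e ^ 2) := Real.le_sqrt_of_sq_le (by nlinarith)
  unfold smoothPosPart
  linarith

lemma smoothPosPart_le_max_add (he : 0 < e) (z : ℝ) : smoothPosPart e z ≤ max z 0 + e := by
  have hsqrt : √(z ^ 2 + e ^ 2) ≤ |z| + e := by
    rw [Real.sqrt_le_left (by positivity)]
    nlinarith [abs_nonneg z, sq_abs z]
  have habs : z + |z| = 2 * max z 0 := by
    rcases le_total 0 z with hz | hz
    · rw [abs_of_nonneg hz, max_eq_left hz, two_mul]
    · rw [abs_of_nonpos hz, max_eq_right hz, add_neg_cancel, mul_zero]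
  unfold smoothPosPart
  linarith

end SmoothPosPart

/-- A solution of the backward heat equation on the half-line with a homogeneous Neumann condition
at `x = 0`. -/
def cosBarrier (k T t x : ℝ) : ℝ := 1 - 2 * exp (k ^ 2 * (t - T)) * cos (k * x)

/-- The spatial derivative of `cosBarrier`. -/
def cosBarrierDeriv (k T t x : ℝ) : ℝ := 2 * k * exp (k ^ 2 * (t - T)) * sin (k * x)

/-- The second spatial derivative of `cosBarrier`. -/
def cosBarrierDeriv₂ (k T t x : ℝ) : ℝ := 2 * k ^ 2 * exp (k ^ 2 * (t - T)) * cos (k * x)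

section CosBarrier

variable {k T : ℝ}

@[fun_prop]
lemma continuous_cosBarrier : Continuous fun q : ℝ × ℝ => cosBarrier k T q.1 q.2 := by
  unfold cosBarrier
  fun_prop

@[fun_prop]
lemma continuous_cosBarrierDeriv : Continuous fun q : ℝ × ℝ => cosBarrierDeriv k T q.1 q.2 := by
  unfold cosBarrierDeriv
  fun_prop

@[fun_prop]
lemma continuous_cosBarrierDeriv₂ : Continuous fun q : ℝ × ℝ => cosBarrierDeriv₂ k T q.1 q.2 := by
  unfold cosBarrierDeriv₂
  fun_prop

lemma hasDerivAt_cosBarrier_left (k T t x : ℝ) :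
    HasDerivAt (fun τ => cosBarrier k T τ x) (-cosBarrierDeriv₂ k T t x) t := by
  have hexp := (((hasDerivAt_id t).sub_const T).const_mul (k ^ 2)).exp
  refine (((hexp.const_mul 2).mul_const (cos (k * x))).const_sub 1).congr_deriv ?_
  simp only [id, cosBarrierDeriv₂]
  ring

lemma hasDerivAt_cosBarrier_right (k T t x : ℝ) :
    HasDerivAt (cosBarrier k T t) (cosBarrierDeriv k T t x) x := by
  have hcos := ((hasDerivAt_id x).const_mul k).cos
  refine ((hcos.const_mul (2 * exp (k ^ 2 * (t - T)))).const_sub 1).congr_deriv ?_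
  simp only [id, cosBarrierDeriv]
  ring

lemma hasDerivAt_cosBarrierDeriv (k T t x : ℝ) :
    HasDerivAt (cosBarrierDeriv k T t) (cosBarrierDeriv₂ k T t x) x := by
  have hsin := ((hasDerivAt_id x).const_mul k).sin
  refine (hsin.const_mul (2 * k * exp (k ^ 2 * (t - T)))).congr_deriv ?_
  simp only [id, cosBarrierDeriv₂]
  ring

lemma half_le_cos_pi_div_mul {L x : ℝ} (hL : 0 < L) (hx : x ∈ Icc 0 L) :
    1 / 2 ≤ cos (π / (3 * L) * x) := by
  have hπ := Real.pi_pos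
  have hle : π / (3 * L) * x ≤ π / 3 := by
    calc π / (3 * L) * x ≤ π / (3 * L) * L := by gcongr; exact hx.2
      _ = π / 3 := by field_simp
  rw [← Real.cos_pi_div_three]
  exact Real.cos_le_cos_of_nonneg_of_le_pi (mul_nonneg (by positivity) hx.1) (by linarith) hle

lemma exp_neg_four_mul_pi_div_nine_le : exp (-(4 * π / 9)) ≤ 1 / 4 := by
  have hlog : Real.log 4 ≤ 4 * π / 9 := by
    rw [show (4 : ℝ) = 2 ^ 2 by norm_num, Real.log_pow]
    norm_num
    linarith [Real.log_two_lt_d9, Real.pi_gt_d2]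
  rw [Real.exp_neg, one_div]
  exact inv_anti₀ (by norm_num) ((Real.log_le_iff_le_exp (by norm_num)).1 hlog)

variable {L x : ℝ}

lemma cosBarrier_le_one (hL : 0 < L) (hx : x ∈ Icc 0 L) (t : ℝ) :
    cosBarrier (π / (3 * L)) T t x ≤ 1 := by
  have hcos : 0 ≤ cos (π / (3 * L) * x) := by linarith [half_le_cos_pi_div_mul hL hx]
  have : 0 ≤ 2 * exp ((π / (3 * L)) ^ 2 * (t - T)) * cos (π / (3 * L) * x) := by positivity
  unfold cosBarrier
  linarith

lemma cosBarrier_terminal_nonpos (hL : 0 < L) (hx : x ∈ Icc 0 L) :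
    cosBarrier (π / (3 * L)) T T x ≤ 0 := by
  simp only [cosBarrier, sub_self, mul_zero, Real.exp_zero, mul_one]
  linarith [half_le_cos_pi_div_mul hL hx]

lemma half_le_cosBarrier_zero (hL : 0 < L) (x : ℝ) :
    1 / 2 ≤ cosBarrier (π / (3 * L)) (4 * L ^ 2 / π) 0 x := by
  have hexponent : (π / (3 * L)) ^ 2 * (0 - 4 * L ^ 2 / π) = -(4 * π / 9) := by
    field_simp [Real.pi_ne_zero]
    ring
  rw [cosBarrier, hexponent]
  nlinarith [exp_neg_four_mul_pi_div_nine_le, Real.exp_pos (-(4 * π / 9)),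
    Real.cos_le_one (π / (3 * L) * x)]

end CosBarrier

/-! ### Global solutions -/

/-- A global-in-time solution of problem (P), without its initial data: `s` is the free boundary
and `ux`, `uxx` are the spatial derivatives of `u`. Outside the region
`{0 ≤ t, 0 ≤ x ≤ s t}` the values only serve to express the continuity of `u` and `ux` up to the
boundary, including at time `0`, as continuity on the plane. -/
structure GlobalFlow (p : ℝ) where
  s : ℝ → ℝ
  u : ℝ → ℝ → ℝ
  ux : ℝ → ℝ → ℝ
  uxx : ℝ → ℝ → ℝ
  continuous_s : Continuous s
  continuous_u : Continuous fun q : ℝ × ℝ => u q.1 q.2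
  continuous_ux : Continuous fun q : ℝ × ℝ => ux q.1 q.2
  s_pos : ∀ t, 0 < s t
  u_nonneg : ∀ t x, 0 ≤ u t x
  hasDerivAt_s : ∀ t, 0 < t → HasDerivAt s (-ux t (s t)) t
  hasDerivAt_u_time : ∀ t, 0 < t → ∀ x ∈ Ioo 0 (s t), HasDerivAt (fun τ => u τ x) (uxx t x) t
  hasDerivAt_u : ∀ t, 0 < t → ∀ x ∈ Ioo 0 (s t), HasDerivAt (u t) (ux t x) x
  hasDerivAt_ux : ∀ t, 0 < t → ∀ x ∈ Ioo 0 (s t), HasDerivAt (ux t) (uxx t x) x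
  continuousOn_uxx : ContinuousOn (fun q : ℝ × ℝ => uxx q.1 q.2)
    {q : ℝ × ℝ | 0 < q.1 ∧ q.2 ∈ Ioo 0 (s q.1)}
  ux_zero : ∀ t, 0 < t → ux t 0 = -u t 0 ^ p
  u_boundary : ∀ t, 0 < t → u t (s t) = 0

namespace GlobalFlow

variable {p : ℝ} (F : GlobalFlow p) {t τ : ℝ}

section Continuity

variable {X : Type*} [TopologicalSpace X] {f g : X → ℝ}

@[fun_prop]
lemma continuous_s_comp (hf : Continuous f) : Continuous fun y => F.s (f y) :=
  F.continuous_s.comp hf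

@[fun_prop]
lemma continuous_u_comp (hf : Continuous f) (hg : Continuous g) :
    Continuous fun y => F.u (f y) (g y) :=
  F.continuous_u.comp (hf.prodMk hg)

@[fun_prop]
lemma continuous_ux_comp (hf : Continuous f) (hg : Continuous g) :
    Continuous fun y => F.ux (f y) (g y) :=
  F.continuous_ux.comp (hf.prodMk hg)

end Continuity

lemma integral_ux_eq_sub {a b : ℝ} (ht : 0 < t) (ha : 0 ≤ a) (hab : a ≤ b) (hb : b ≤ F.s t) :
    ∫ x in a..b, F.ux t x = F.u t b - F.u t a :=
  intervalIntegral.integral_eq_sub_of_hasDerivAt_of_le hab (by fun_prop)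
    (fun x hx => F.hasDerivAt_u t ht x ⟨ha.trans_lt hx.1, hx.2.trans_le hb⟩)
    (Continuous.intervalIntegrable (by fun_prop) _ _)

lemma ux_boundary_nonpos (ht : 0 < t) : F.ux t (F.s t) ≤ 0 := by
  by_contra! hpos
  have hnhds : ∀ᶠ x in 𝓝[<] F.s t, 0 < F.ux t x :=
    ((F.continuous_ux_comp continuous_const continuous_id).continuousAt.eventually_const_lt
      hpos).filter_mono nhdsWithin_le_nhds
  obtain ⟨a, ha, hux⟩ := mem_nhdsLT_iff_exists_Ioo_subset.1 hnhds
  set b := max a 0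
  have hb : b < F.s t := max_lt ha (F.s_pos t)
  have integral_pos : 0 < ∫ x in b..F.s t, F.ux t x :=
    intervalIntegral.intervalIntegral_pos_of_pos_on
      (Continuous.intervalIntegrable (by fun_prop) _ _)
      (fun x hx => hux ⟨(le_max_left a 0).trans_lt hx.1, hx.2⟩) hb
  rw [F.integral_ux_eq_sub ht (le_max_right a 0) hb.le le_rfl, F.u_boundary t ht] at integral_pos
  linarith [F.u_nonneg t b]

lemma monotoneOn_s : MonotoneOn F.s (Ici 0) := by
  refine monotoneOn_of_hasDerivWithinAt_nonneg (convex_Ici 0) F.continuous_s.continuousOn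
    (f' := fun t => -F.ux t (F.s t)) (fun t ht => ?_) fun t ht => ?_ <;>
  rw [interior_Ici] at ht
  · exact (F.hasDerivAt_s t ht).hasDerivWithinAt
  · exact neg_nonneg.2 (F.ux_boundary_nonpos ht)

lemma Ioo_subset_of_le (ht : 0 < t) (hτ : t ≤ τ) : Ioo 0 (F.s t) ⊆ Ioo 0 (F.s τ) :=
  Ioo_subset_Ioo_right (F.monotoneOn_s ht.le (ht.le.trans hτ) hτ)

lemma continuousOn_uxx_prod (ht : 0 < t) :
    ContinuousOn (fun q : ℝ × ℝ => F.uxx q.1 q.2) (Ici t ×ˢ Ioo 0 (F.s t)) :=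
  F.continuousOn_uxx.mono fun _ hq => ⟨ht.trans_le hq.1, F.Ioo_subset_of_le ht hq.1 hq.2⟩

/-- The energy `½ ∫ uₓ² - u(t,0)^(p+1) / (p+1)` at time `t`. -/
def energy (t : ℝ) : ℝ :=
  1 / 2 * (∫ x in (0 : ℝ)..F.s t, F.ux t x ^ 2) - F.u t 0 ^ (p + 1) / (p + 1)

/-- The Nehari functional `u(t,0)^(p+1) - ∫ uₓ²`, half the rate of change of `sqMass`. -/
def nehari (t : ℝ) : ℝ := F.u t 0 ^ (p + 1) - ∫ x in (0 : ℝ)..F.s t, F.ux t x ^ 2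

/-- The squared `L²` norm of `u(t,·)`. -/
def sqMass (t : ℝ) : ℝ := ∫ x in (0 : ℝ)..F.s t, F.u t x ^ 2

/-- The `L¹` norm of `u(t,·)`. -/
def mass (t : ℝ) : ℝ := ∫ x in (0 : ℝ)..F.s t, F.u t x

lemma continuous_sqMass : Continuous F.sqMass :=
  continuous_intervalIntegral_of_continuous (by fun_prop) continuous_const F.continuous_s

lemma continuous_energy (hp : 0 < p) : Continuous F.energy := by
  have hgrad : Continuous fun t => ∫ x in (0 : ℝ)..F.s t, F.ux t x ^ 2 :=
    continuous_intervalIntegral_of_continuous (by fun_prop) continuous_const F.continuous_s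
  have hflux : Continuous fun t => F.u t 0 ^ (p + 1) :=
    Continuous.rpow_const (by fun_prop) fun _ => Or.inr (by linarith)
  exact (hgrad.const_mul _).sub (hflux.div_const _)

lemma integral_ux_sq_nonneg (t : ℝ) : 0 ≤ ∫ x in (0 : ℝ)..F.s t, F.ux t x ^ 2 :=
  intervalIntegral.integral_nonneg (F.s_pos t).le fun _ _ => sq_nonneg _

lemma u_zero_mul_ux_zero (hp : 0 < p) (ht : 0 < t) : F.u t 0 * F.ux t 0 = -F.u t 0 ^ (p + 1) := by
  rw [F.ux_zero t ht, Real.rpow_add_one' (F.u_nonneg t 0) (by linarith)]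
  ring

lemma hasDerivWithinAt_sqMass (hp : 0 < p) (ht : 0 < t) :
    HasDerivWithinAt F.sqMass (2 * F.nehari t) (Ici t) t := by
  refine (hasDerivWithinAt_integral_moving_boundary (f := fun τ x => F.u τ x ^ 2)
    (ft := fun τ x => 2 * F.u τ x * F.uxx τ x) (G := fun τ x => 2 * (F.u τ x * F.ux τ x))
    (R := fun τ x => -2 * F.ux τ x ^ 2) (by fun_prop) (by fun_prop) (by fun_prop) F.continuous_s
    (F.hasDerivAt_s t ht) (F.s_pos t) (by simp [F.u_boundary t ht]) (fun τ hτ x hx => ?_)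
    (fun τ hτ x hx => ?_)
    (ContinuousOn.mul (by fun_prop) (F.continuousOn_uxx_prod ht))).congr_deriv ?_
  · have hx' := F.Ioo_subset_of_le ht hτ hx
    simpa using (F.hasDerivAt_u_time τ (ht.trans_le hτ) x hx').fun_pow 2
  · have hx' := F.Ioo_subset_of_le ht hτ hx
    refine (((F.hasDerivAt_u τ (ht.trans_le hτ) x hx').mul
      (F.hasDerivAt_ux τ (ht.trans_le hτ) x hx')).const_mul 2).congr_deriv ?_
    ring
  · rw [intervalIntegral.integral_const_mul, F.u_boundary t ht, F.u_zero_mul_ux_zero hp ht, nehari]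
    ring

/-! ### Energy dissipation -/

/-- The flux form of the derivative in `τ` of `½ ∫ (u(τ,x) - u(t,x))² dx` over `(0, s t)`. -/
def incrementRate (t τ : ℝ) : ℝ :=
  (F.u τ (F.s t) - F.u t (F.s t)) * F.ux τ (F.s t) - (F.u τ 0 - F.u t 0) * F.ux τ 0 +
    ∫ x in (0 : ℝ)..F.s t, -(F.ux τ x * (F.ux τ x - F.ux t x))

lemma continuous_incrementRate (t : ℝ) : Continuous (F.incrementRate t) :=
  Continuous.add (by fun_prop)
    (continuous_intervalIntegral_of_continuous (by fun_prop) continuous_const continuous_const)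

lemma incrementRate_self (t : ℝ) : F.incrementRate t t = 0 := by
  simp [incrementRate]

lemma integral_incrementRate (ht : 0 < t) (hτ : t ≤ τ) :
    ∫ y in t..τ, F.incrementRate t y = ∫ x in (0 : ℝ)..F.s t, (F.u τ x - F.u t x) ^ 2 / 2 := by
  have h := integral_sub_eq_integral_flux_add_source
    (f := fun y x => (F.u y x - F.u t x) ^ 2 / 2)
    (ft := fun y x => (F.u y x - F.u t x) * F.uxx y x)
    (G := fun y x => (F.u y x - F.u t x) * F.ux y x)
    (R := fun y x => -(F.ux y x * (F.ux y x - F.ux t x)))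
    (fun y => by fun_prop) (by fun_prop) (by fun_prop) hτ (F.s_pos t)
    (fun y hy x hx => ?_) (fun y hy x hx => ?_) ?_
  · simpa [incrementRate] using h.symm
  · have hu := F.hasDerivAt_u_time y (ht.trans_le hy.1) x (F.Ioo_subset_of_le ht hy.1 hx)
    refine (((hu.sub_const (F.u t x)).fun_pow 2).div_const 2).congr_deriv ?_
    simp only [Nat.cast_ofNat, Nat.add_one_sub_one, pow_one]
    ring
  · have hx' := F.Ioo_subset_of_le ht hy.1 hx
    refine (((F.hasDerivAt_u y (ht.trans_le hy.1) x hx').sub (F.hasDerivAt_u t ht x hx)).mul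
      (F.hasDerivAt_ux y (ht.trans_le hy.1) x hx')).congr_deriv ?_
    simp only [Pi.sub_apply]
    ring
  · exact ContinuousOn.mul (by fun_prop)
      ((F.continuousOn_uxx_prod ht).mono (prod_mono_left Icc_subset_Ici_self))

/-- The contribution of the strip `(s t, s τ)` to the energy dissipated between `t` and `τ`. -/
def boundaryGain (t τ : ℝ) : ℝ :=
  ∫ x in F.s t..F.s τ, (F.ux τ (F.s t) * F.ux τ x - F.ux τ x ^ 2 / 2)

lemma hasDerivAt_boundaryGain (ht : 0 < t) :
    HasDerivAt (F.boundaryGain t) ((-F.ux t (F.s t)) ^ 3 / 2) t := by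
  refine (hasDerivAt_integral_moving_endpoint
    (g := fun τ x => F.ux τ (F.s t) * F.ux τ x - F.ux τ x ^ 2 / 2) F.continuous_s (by fun_prop)
    (F.hasDerivAt_s t ht)).congr_deriv ?_
  ring

lemma energy_sub_energy_eq (ht : 0 < t) (hτ : t ≤ τ) :
    F.energy t - F.energy τ = F.incrementRate t τ + F.boundaryGain t τ +
      1 / 2 * (∫ x in (0 : ℝ)..F.s t, (F.ux τ x - F.ux t x) ^ 2) +
      (F.u τ 0 ^ (p + 1) / (p + 1) - F.u t 0 ^ (p + 1) / (p + 1) -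
        F.u τ 0 ^ p * (F.u τ 0 - F.u t 0)) := by
  have hτ₀ : 0 < τ := ht.trans_le hτ
  have hint {f : ℝ → ℝ} (hf : Continuous f) (a b : ℝ) : IntervalIntegrable f volume a b :=
    hf.intervalIntegrable a b
  have split_domain : ∫ x in (0 : ℝ)..F.s τ, F.ux τ x ^ 2 =
      (∫ x in (0 : ℝ)..F.s t, F.ux τ x ^ 2) + ∫ x in F.s t..F.s τ, F.ux τ x ^ 2 :=
    (intervalIntegral.integral_add_adjacent_intervals (hint (by fun_prop) _ _)
      (hint (by fun_prop) _ _)).symm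
  have polarization : ∫ x in (0 : ℝ)..F.s t, -(F.ux τ x * (F.ux τ x - F.ux t x)) =
      1 / 2 * (∫ x in (0 : ℝ)..F.s t, F.ux t x ^ 2) -
        1 / 2 * (∫ x in (0 : ℝ)..F.s t, F.ux τ x ^ 2) -
        1 / 2 * ∫ x in (0 : ℝ)..F.s t, (F.ux τ x - F.ux t x) ^ 2 := by
    simp only [← intervalIntegral.integral_const_mul]
    rw [← intervalIntegral.integral_sub (hint (by fun_prop) _ _) (hint (by fun_prop) _ _),
      ← intervalIntegral.integral_sub (hint (by fun_prop) _ _) (hint (by fun_prop) _ _)]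
    exact intervalIntegral.integral_congr fun x _ => by ring
  have strip : F.boundaryGain t τ =
      -(F.ux τ (F.s t) * F.u τ (F.s t)) - 1 / 2 * ∫ x in F.s t..F.s τ, F.ux τ x ^ 2 := by
    have hftc := F.integral_ux_eq_sub hτ₀ (F.s_pos t).le (F.monotoneOn_s ht.le hτ₀.le hτ) le_rfl
    rw [F.u_boundary τ hτ₀, zero_sub] at hftc
    rw [boundaryGain, intervalIntegral.integral_sub (hint (by fun_prop) _ _)
      (hint (by fun_prop) _ _), intervalIntegral.integral_const_mul, hftc,
      intervalIntegral.integral_div]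
    ring
  simp only [energy, incrementRate, split_domain, polarization, strip, F.u_boundary t ht,
    F.ux_zero τ hτ₀]
  ring

-- The jump of the boundary flux is absorbed by the increment of the gradient, thanks to the
-- trace inequality `sq_left_le_mul_integral_deriv_sq_add`.
lemma exists_eventually_le_energy_sub_energy (hp : 1 ≤ p) (ht : 0 < t) :
    ∃ M, ∀ᶠ τ in 𝓝[>] t, F.incrementRate t τ + (F.boundaryGain t τ -
      M * ∫ y in t..τ, F.incrementRate t y) ≤ F.energy t - F.energy τ := by
  set R := F.u t 0 + 1
  set C := p * R ^ (p - 1)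
  have hR : 0 ≤ R := by linarith [F.u_nonneg t 0]
  have hC : 0 ≤ C := mul_nonneg (by linarith) (Real.rpow_nonneg hR _)
  set ε := 1 / (2 * (C + 1))
  have hε : 0 < ε := by positivity
  have hCε : C * ε ≤ 1 / 2 := by
    rw [mul_one_div, div_le_iff₀ (by positivity)]
    linarith
  set c := 1 / (F.s t - 0) + 1 / ε
  have hbound : ∀ᶠ τ in 𝓝[>] t, F.u τ 0 < R :=
    ((F.continuous_u_comp continuous_id continuous_const).continuousAt.eventually_lt_const
      (lt_add_one (F.u t 0))).filter_mono nhdsWithin_le_nhds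
  refine ⟨2 * (C * c), ?_⟩
  filter_upwards [hbound, self_mem_nhdsWithin] with τ hτR hτ
  rw [F.energy_sub_energy_eq ht (le_of_lt hτ), F.integral_incrementRate ht (le_of_lt hτ),
    intervalIntegral.integral_div]
  have potential := rpow_mul_sub_sub_le_rpow_add_one_div (R := R) hp
    ⟨F.u_nonneg t 0, (lt_add_one _).le⟩ ⟨F.u_nonneg τ 0, hτR.le⟩
  have trace := sq_left_le_mul_integral_deriv_sq_add (f := fun x => F.u τ x - F.u t x)
    (f' := fun x => F.ux τ x - F.ux t x) (F.s_pos t) hε (by fun_prop) (by fun_prop)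
    fun x hx => (F.hasDerivAt_u τ (ht.trans hτ) x (F.Ioo_subset_of_le ht (le_of_lt hτ) hx)).sub
      (F.hasDerivAt_u t ht x hx)
  have hgrad : 0 ≤ ∫ x in (0 : ℝ)..F.s t, (F.ux τ x - F.ux t x) ^ 2 :=
    intervalIntegral.integral_nonneg (F.s_pos t).le fun _ _ => sq_nonneg _
  have absorb := mul_le_mul_of_nonneg_right hCε hgrad
  have trace_mul := mul_le_mul_of_nonneg_left trace hC
  linarith

lemma hasDerivWithinAt_integral_mul_u (hp : 0 < p) (ht : 0 < t) :
    HasDerivWithinAt (fun τ => ∫ x in (0 : ℝ)..F.s t, F.u t x * F.u τ x) (F.nehari t)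
      (Ici t) t := by
  refine (hasDerivWithinAt_integral_flux_add_source (f := fun τ x => F.u t x * F.u τ x)
    (ft := fun τ x => F.u t x * F.uxx τ x) (G := fun τ x => F.u t x * F.ux τ x)
    (R := fun τ x => -(F.ux t x * F.ux τ x)) (fun τ => by fun_prop) (by fun_prop) (by fun_prop)
    (F.s_pos t) (fun τ hτ x hx => ?_) (fun τ hτ x hx => ?_)
    (ContinuousOn.mul (by fun_prop) (F.continuousOn_uxx_prod ht))).congr_deriv ?_
  · exact (F.hasDerivAt_u_time τ (ht.trans_le hτ) x (F.Ioo_subset_of_le ht hτ hx)).const_mul _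
  · refine ((F.hasDerivAt_u t ht x hx).mul (F.hasDerivAt_ux τ (ht.trans_le hτ) x
      (F.Ioo_subset_of_le ht hτ hx))).congr_deriv ?_
    ring
  · simp only [intervalIntegral.integral_neg, ← sq, F.u_boundary t ht, F.u_zero_mul_ux_zero hp ht,
      nehari]
    ring

lemma mul_sub_le_integral_sq_increment (t τ c : ℝ) :
    c * ((∫ x in (0 : ℝ)..F.s t, F.u t x * F.u τ x) - F.sqMass t) - c ^ 2 / 2 * F.sqMass t ≤
      ∫ x in (0 : ℝ)..F.s t, (F.u τ x - F.u t x) ^ 2 / 2 := by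
  have hint {f : ℝ → ℝ} (hf : Continuous f) : IntervalIntegrable f volume 0 (F.s t) :=
    hf.intervalIntegrable _ _
  rw [sqMass, ← intervalIntegral.integral_sub (hint (by fun_prop)) (hint (by fun_prop)),
    ← intervalIntegral.integral_const_mul, ← intervalIntegral.integral_const_mul,
    ← intervalIntegral.integral_sub (hint (by fun_prop)) (hint (by fun_prop))]
  refine intervalIntegral.integral_mono_on (F.s_pos t).le (hint (by fun_prop)) (hint (by fun_prop))
    fun x _ => ?_
  linarith [sq_nonneg (F.u τ x - F.u t x - c * F.u t x)]

lemma frequently_lt_incrementRate (hp : 0 < p) (ht : 0 < t) {θ k : ℝ}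
    (hk : k < 2 * θ * F.nehari t - θ ^ 2 * F.sqMass t) :
    ∃ᶠ τ in 𝓝[>] t, k * (τ - t) < F.incrementRate t τ := by
  refine frequently_mul_lt_of_eventually_lt_integral (F.continuous_incrementRate t) ?_
  have hpairing := (F.hasDerivWithinAt_integral_mul_u hp ht).const_mul θ
  have hself : ∫ x in (0 : ℝ)..F.s t, F.u t x * F.u t x = F.sqMass t := by
    simp only [sqMass, sq]
  filter_upwards [eventually_add_mul_lt_of_hasDerivWithinAt_Ici hpairing
    (c := (k + θ ^ 2 * F.sqMass t) / 2) (by linarith), self_mem_nhdsWithin] with τ hτ htτ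
  rw [F.integral_incrementRate ht (le_of_lt htτ)]
  refine lt_of_lt_of_le ?_ (F.mul_sub_le_integral_sq_increment t τ ((τ - t) * θ))
  rw [hself] at hτ
  nlinarith [mul_lt_mul_of_pos_left hτ (sub_pos.2 htτ)]

lemma frequently_slope_energy_lt (hp : 1 < p) (ht : 0 < t) (θ : ℝ) {r : ℝ}
    (hr : -((-F.ux t (F.s t)) ^ 3 / 2 + (2 * θ * F.nehari t - θ ^ 2 * F.sqMass t)) < r) :
    ∃ᶠ τ in 𝓝[>] t, slope F.energy t τ < r := by
  set v := (-F.ux t (F.s t)) ^ 3 / 2 with hv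
  set w := 2 * θ * F.nehari t - θ ^ 2 * F.sqMass t
  obtain ⟨M, hM⟩ := F.exists_eventually_le_energy_sub_energy hp.le ht
  have hcont := F.continuous_incrementRate t
  have hK : HasDerivAt (fun τ => ∫ y in t..τ, F.incrementRate t y) 0 t :=
    F.incrementRate_self t ▸ hcont.integral_hasStrictDerivAt t t |>.hasDerivAt
  have hgain := ((F.hasDerivAt_boundaryGain ht).sub (hK.const_mul M)).hasDerivWithinAt (s := Ici t)
  rw [mul_zero, sub_zero, ← hv] at hgain
  have hfreq := F.frequently_lt_incrementRate (by linarith) ht (θ := θ) (k := w - (v + w + r) / 2)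
    (by linarith)
  refine (hfreq.and_eventually ((eventually_add_mul_lt_of_hasDerivWithinAt_Ici hgain
    (c := v - (v + w + r) / 2) (by linarith)).and
    (hM.and self_mem_nhdsWithin))).mono ?_
  rintro τ ⟨hrate, hgain_τ, hM_τ, htτ⟩
  rw [slope_def_field, div_lt_iff₀ (sub_pos.2 htτ)]
  simp only [Pi.sub_apply, boundaryGain, intervalIntegral.integral_same, mul_zero, sub_zero,
    zero_add] at hgain_τ hM_τ
  linarith

lemma antitoneOn_energy (hp : 1 < p) : AntitoneOn F.energy (Ici 0) := by
  intro x hx y hy hxy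
  have h := antitoneOn_sub_of_liminf_slope_right_le (B := 0) (B' := 0) (a := 0) (b := y)
    (F.continuous_energy (by linarith)).continuousOn continuousOn_const
    (fun t _ => hasDerivWithinAt_const _ _ _) (fun t ht r hr => ?_) ⟨hx, hxy⟩ ⟨hy, le_rfl⟩ hxy
  · simpa using h
  · have hv : 0 ≤ (-F.ux t (F.s t)) ^ 3 := pow_nonneg (neg_nonneg.2 (F.ux_boundary_nonpos ht.1)) 3
    rw [Pi.zero_apply] at hr
    exact F.frequently_slope_energy_lt hp ht.1 0 (by linarith)

-- Since `v ^ 3 ≥ 3 κ ^ 2 v - 2 κ ^ 3`, with equality at `v = κ`, comparing with the mean speed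
-- `κ` of the free boundary gives Jensen's inequality without integrating `s' ^ 3`.
lemma energy_add_cube_advance_le (hp : 1 < p) {T : ℝ} (hT : 0 < T) :
    F.energy T + (F.s T - F.s 0) ^ 3 / (2 * T ^ 2) ≤ F.energy 0 := by
  set κ := (F.s T - F.s 0) / T
  have hκ : 0 ≤ κ := div_nonneg (sub_nonneg.2 (F.monotoneOn_s self_mem_Ici hT.le hT.le)) hT.le
  have hadvance : F.s T - F.s 0 = κ * T := (div_mul_cancel₀ _ hT.ne').symm
  have hanti := antitoneOn_sub_of_liminf_slope_right_le (a := 0) (b := T)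
    (B := fun t => -(1 / 2 * (3 * κ ^ 2 * F.s t - 2 * κ ^ 3 * t)))
    (B' := fun t => -(1 / 2 * (3 * κ ^ 2 * -F.ux t (F.s t) - 2 * κ ^ 3)))
    (F.continuous_energy (by linarith)).continuousOn (by fun_prop) (fun t ht => ?_)
    (fun t ht r hr => F.frequently_slope_energy_lt hp ht.1 0 ?_)
    (left_mem_Icc.2 hT.le) (right_mem_Icc.2 hT.le) hT.le
  · have hcube : (F.s T - F.s 0) ^ 3 / (2 * T ^ 2) = 1 / 2 * κ ^ 3 * T := by
      rw [hadvance]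
      field_simp
    have hs : F.s T = F.s 0 + κ * T := by linarith
    simp only [hs] at hanti
    rw [hcube]
    linarith
  · refine (((((F.hasDerivAt_s t ht.1).const_mul (3 * κ ^ 2)).sub
      ((hasDerivAt_id t).const_mul (2 * κ ^ 3))).const_mul (1 / 2)).neg).congr_deriv ?_
        |>.hasDerivWithinAt
    ring
  · have hv : 0 ≤ -F.ux t (F.s t) := neg_nonneg.2 (F.ux_boundary_nonpos ht.1)
    have hcube : 0 ≤ (-F.ux t (F.s t) - κ) ^ 2 * (-F.ux t (F.s t) + 2 * κ) := by positivity
    linarith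

lemma neg_mul_energy_le_nehari (hp : 1 < p) (t : ℝ) : -((p + 1) * F.energy t) ≤ F.nehari t := by
  have hgrad := F.integral_ux_sq_nonneg t
  have hmul : (p + 1) * (F.u t 0 ^ (p + 1) / (p + 1)) = F.u t 0 ^ (p + 1) :=
    mul_div_cancel₀ _ (by linarith)
  rw [energy, nehari, mul_sub, hmul]
  nlinarith

lemma sqMass_pos_of_energy_neg (hp : 0 < p) (hE : F.energy t < 0) : 0 < F.sqMass t := by
  have hu : 0 < F.u t 0 := by
    refine (F.u_nonneg t 0).lt_of_ne fun hzero => hE.not_ge ?_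
    rw [energy, ← hzero, Real.zero_rpow (by linarith), zero_div, sub_zero]
    linarith [F.integral_ux_sq_nonneg t]
  exact intervalIntegral.integral_pos (F.s_pos t) (by fun_prop) (fun _ _ => sq_nonneg _)
    ⟨0, left_mem_Icc.2 (F.s_pos t).le, pow_pos hu 2⟩

lemma frequently_slope_energy_lt_of_neg_nehari_sq_div_lt (hp : 1 < p) (ht : 0 < t) {r : ℝ}
    (hr : -(F.nehari t ^ 2 / F.sqMass t) < r) : ∃ᶠ τ in 𝓝[>] t, slope F.energy t τ < r := by
  have hv : 0 ≤ (-F.ux t (F.s t)) ^ 3 := pow_nonneg (neg_nonneg.2 (F.ux_boundary_nonpos ht)) 3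
  -- The choice of `θ` maximises `2 θ I - θ ^ 2 Y`.
  refine F.frequently_slope_energy_lt hp ht (F.nehari t / F.sqMass t) ?_
  have hmax : 2 * (F.nehari t / F.sqMass t) * F.nehari t -
      (F.nehari t / F.sqMass t) ^ 2 * F.sqMass t = F.nehari t ^ 2 / F.sqMass t := by
    rcases eq_or_ne (F.sqMass t) 0 with hY | hY
    · simp [hY]
    · field_simp
      ring
  linarith

lemma energy_nonneg (hp : 1 < p) (ht : 0 < t) : 0 ≤ F.energy t := by
  obtain ⟨τ, hτ, hEτ⟩ := exists_nonneg_of_liminf_slope_le_neg_sq_div (E := F.energy)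
    (I := F.nehari) (Y := F.sqMass) (a := p + 1) (t₀ := t) (by linarith)
    (F.continuous_energy (by linarith)).continuousOn F.continuous_sqMass.continuousOn
    (fun τ _ => F.sqMass_pos_of_energy_neg (by linarith))
    (fun τ hτ => F.hasDerivWithinAt_sqMass (by linarith) (ht.trans_le hτ))
    (fun τ _ => F.neg_mul_energy_le_nehari hp τ)
    fun τ hτ _ hr => F.frequently_slope_energy_lt_of_neg_nehari_sq_div_lt hp (ht.trans_le hτ) hr
  exact hEτ.trans (F.antitoneOn_energy hp ht.le (ht.le.trans hτ) hτ)

/-! ### Advance of the free boundary -/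

section TestFunction

variable {ψ ψt ψx ψxx : ℝ → ℝ → ℝ} {c T : ℝ}

lemma hasDerivWithinAt_integral_mul (hψ : Continuous fun q : ℝ × ℝ => ψ q.1 q.2)
    (hψt : Continuous fun q : ℝ × ℝ => ψt q.1 q.2) (hψx : Continuous fun q : ℝ × ℝ => ψx q.1 q.2)
    (hψxx : Continuous fun q : ℝ × ℝ => ψxx q.1 q.2)
    (hdt : ∀ t x, HasDerivAt (fun τ => ψ τ x) (ψt t x) t)
    (hdx : ∀ t x, HasDerivAt (ψ t) (ψx t x) x) (hdxx : ∀ t x, HasDerivAt (ψx t) (ψxx t x) x)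
    (ht : 0 < t) :
    HasDerivWithinAt (fun τ => ∫ x in (0 : ℝ)..F.s τ, ψ τ x * F.u τ x)
      (ψ t (F.s t) * F.ux t (F.s t) + (ψ t 0 * F.u t 0 ^ p + ψx t 0 * F.u t 0) +
        ∫ x in (0 : ℝ)..F.s t, (ψt t x + ψxx t x) * F.u t x) (Ici t) t := by
  refine (hasDerivWithinAt_integral_moving_boundary (f := fun τ x => ψ τ x * F.u τ x)
    (ft := fun τ x => ψt τ x * F.u τ x + ψ τ x * F.uxx τ x)
    (G := fun τ x => ψ τ x * F.ux τ x - ψx τ x * F.u τ x)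
    (R := fun τ x => (ψt τ x + ψxx τ x) * F.u τ x) (by fun_prop) (by fun_prop) (by fun_prop)
    F.continuous_s (F.hasDerivAt_s t ht) (F.s_pos t) (by simp [F.u_boundary t ht])
    (fun τ hτ x hx => ?_) (fun τ hτ x hx => ?_)
    (ContinuousOn.add (by fun_prop)
      (ContinuousOn.mul (by fun_prop) (F.continuousOn_uxx_prod ht)))).congr_deriv ?_
  · exact (hdt τ x).mul
      (F.hasDerivAt_u_time τ (ht.trans_le hτ) x (F.Ioo_subset_of_le ht hτ hx))
  · have hx' := F.Ioo_subset_of_le ht hτ hx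
    refine (((hdx τ x).mul (F.hasDerivAt_ux τ (ht.trans_le hτ) x hx')).sub
      ((hdxx τ x).mul (F.hasDerivAt_u τ (ht.trans_le hτ) x hx'))).congr_deriv ?_
    ring
  · rw [F.u_boundary t ht, F.ux_zero t ht]
    ring

lemma integral_mul_add_mul_s_le (hψ : Continuous fun q : ℝ × ℝ => ψ q.1 q.2)
    (hψt : Continuous fun q : ℝ × ℝ => ψt q.1 q.2) (hψx : Continuous fun q : ℝ × ℝ => ψx q.1 q.2)
    (hψxx : Continuous fun q : ℝ × ℝ => ψxx q.1 q.2)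
    (hdt : ∀ t x, HasDerivAt (fun τ => ψ τ x) (ψt t x) t)
    (hdx : ∀ t x, HasDerivAt (ψ t) (ψx t x) x) (hdxx : ∀ t x, HasDerivAt (ψx t) (ψxx t x) x)
    (hsub : ∀ t x, 0 ≤ ψt t x + ψxx t x) (hψ₀ : ∀ t, 0 ≤ ψ t 0) (hψx₀ : ∀ t, 0 ≤ ψx t 0)
    (hT : 0 ≤ T) (hc : ∀ t ∈ Icc 0 T, ψ t (F.s t) ≤ c) :
    (∫ x in (0 : ℝ)..F.s 0, ψ 0 x * F.u 0 x) + c * F.s 0 ≤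
      (∫ x in (0 : ℝ)..F.s T, ψ T x * F.u T x) + c * F.s T := by
  set Φ : ℝ → ℝ := fun t => ∫ x in (0 : ℝ)..F.s t, ψ t x * F.u t x
  have hΦ : Continuous Φ :=
    continuous_intervalIntegral_of_continuous (by fun_prop) continuous_const F.continuous_s
  have hanti := antitoneOn_sub_of_liminf_slope_right_le (f := 0)
    (B := fun t => Φ t + c * F.s t) (a := 0) (b := T) continuousOn_const (by fun_prop)
    (fun t ht => (F.hasDerivWithinAt_integral_mul hψ hψt hψx hψxx hdt hdx hdxx ht.1).add
      ((F.hasDerivAt_s t ht.1).const_mul c).hasDerivWithinAt)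
    (fun t ht r hr => Eventually.frequently (Eventually.of_forall fun τ => ?_))
    (left_mem_Icc.2 hT) (right_mem_Icc.2 hT) hT
  · simp only [Pi.zero_apply] at hanti
    linarith
  · have hsource : 0 ≤ ∫ x in (0 : ℝ)..F.s t, (ψt t x + ψxx t x) * F.u t x :=
      intervalIntegral.integral_nonneg (F.s_pos t).le
        fun x _ => mul_nonneg (hsub t x) (F.u_nonneg t x)
    have hflux : 0 ≤ ψ t 0 * F.u t 0 ^ p := mul_nonneg (hψ₀ t) (Real.rpow_nonneg (F.u_nonneg t 0) p)
    have hflux' : 0 ≤ ψx t 0 * F.u t 0 := mul_nonneg (hψx₀ t) (F.u_nonneg t 0)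
    have hboundary : 0 ≤ (c - ψ t (F.s t)) * -F.ux t (F.s t) :=
      mul_nonneg (sub_nonneg.2 (hc t (Ioo_subset_Icc_self ht)))
        (neg_nonneg.2 (F.ux_boundary_nonpos ht.1))
    rw [slope_def_field, Pi.zero_apply, Pi.zero_apply, sub_self, zero_div]
    linarith

end TestFunction

section Advance

variable {L e : ℝ}

lemma integral_smoothPosPart_cosBarrier_add_le (hL : 0 < L) {T : ℝ} (hT : 0 ≤ T)
    (hsT : F.s T ≤ L) (he : 0 < e) :
    (∫ x in (0 : ℝ)..F.s 0, smoothPosPart e (cosBarrier (π / (3 * L)) T 0 x) * F.u 0 x) +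
        (1 + e) * F.s 0 ≤
      (∫ x in (0 : ℝ)..F.s T, smoothPosPart e (cosBarrier (π / (3 * L)) T T x) * F.u T x) +
        (1 + e) * F.s T := by
  set k := π / (3 * L)
  set Z : ℝ → ℝ → ℝ := cosBarrier k T
  have hg₁ := continuous_smoothPosPartDeriv he
  have hg₂ := continuous_smoothPosPartDeriv₂ he
  refine F.integral_mul_add_mul_s_le (ψ := fun t x => smoothPosPart e (Z t x))
    (ψt := fun t x => smoothPosPartDeriv e (Z t x) * -cosBarrierDeriv₂ k T t x)
    (ψx := fun t x => smoothPosPartDeriv e (Z t x) * cosBarrierDeriv k T t x)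
    (ψxx := fun t x => smoothPosPartDeriv₂ e (Z t x) * cosBarrierDeriv k T t x *
      cosBarrierDeriv k T t x + smoothPosPartDeriv e (Z t x) * cosBarrierDeriv₂ k T t x)
    (by fun_prop) (by fun_prop) (by fun_prop) (by fun_prop)
    (fun t x => (hasDerivAt_smoothPosPart he _).comp t (hasDerivAt_cosBarrier_left k T t x))
    (fun t x => (hasDerivAt_smoothPosPart he _).comp x (hasDerivAt_cosBarrier_right k T t x))
    (fun t x => ((hasDerivAt_smoothPosPartDeriv he _).comp x
      (hasDerivAt_cosBarrier_right k T t x)).mul (hasDerivAt_cosBarrierDeriv k T t x))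
    (fun t x => ?_) (fun t => smoothPosPart_nonneg _ _) (fun t => by simp [cosBarrierDeriv]) hT
    (fun t ht => ?_)
  · nlinarith [mul_nonneg (smoothPosPartDeriv₂_nonneg e (Z t x))
      (mul_self_nonneg (cosBarrierDeriv k T t x))]
  · have hst : F.s t ∈ Icc 0 L :=
      ⟨(F.s_pos t).le, (F.monotoneOn_s ht.1 hT ht.2).trans hsT⟩
    refine (smoothPosPart_le_max_add he _).trans ?_
    gcongr
    exact max_le (cosBarrier_le_one hL hst t) zero_le_one

lemma half_mass_add_le (hL : 0 < L) (hsT : F.s (4 * L ^ 2 / π) ≤ L) (he : 0 < e) :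
    1 / 2 * F.mass 0 + (1 + e) * F.s 0 ≤
      e * F.mass (4 * L ^ 2 / π) + (1 + e) * F.s (4 * L ^ 2 / π) := by
  set T := 4 * L ^ 2 / π
  have hadvance := F.integral_smoothPosPart_cosBarrier_add_le hL (by positivity) hsT he
  have hint {f : ℝ → ℝ} (hf : Continuous f) (b : ℝ) : IntervalIntegrable f volume 0 b :=
    hf.intervalIntegrable 0 b
  have initial : 1 / 2 * F.mass 0 ≤
      ∫ x in (0 : ℝ)..F.s 0, smoothPosPart e (cosBarrier (π / (3 * L)) T 0 x) * F.u 0 x := by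
    rw [mass, ← intervalIntegral.integral_const_mul]
    refine intervalIntegral.integral_mono_on (F.s_pos 0).le (hint (by fun_prop) _)
      (hint (by fun_prop) _) fun x _ => mul_le_mul_of_nonneg_right ?_ (F.u_nonneg 0 x)
    exact (half_le_cosBarrier_zero hL x).trans (le_smoothPosPart _ _)
  have terminal :
      ∫ x in (0 : ℝ)..F.s T, smoothPosPart e (cosBarrier (π / (3 * L)) T T x) * F.u T x ≤
        e * F.mass T := by
    rw [mass, ← intervalIntegral.integral_const_mul]
    refine intervalIntegral.integral_mono_on (F.s_pos T).le (hint (by fun_prop) _)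
      (hint (by fun_prop) _) fun x hx => mul_le_mul_of_nonneg_right ?_ (F.u_nonneg T x)
    have hZ := cosBarrier_terminal_nonpos (T := T) hL ⟨hx.1, hx.2.trans hsT⟩
    have h := smoothPosPart_le_max_add he (cosBarrier (π / (3 * L)) T T x)
    rwa [max_eq_right hZ, zero_add] at h
  linarith

lemma mass_nonneg (t : ℝ) : 0 ≤ F.mass t :=
  intervalIntegral.integral_nonneg (F.s_pos t).le fun x _ => F.u_nonneg t x

lemma half_mass_le_advance (hL : L = F.s 0 + F.mass 0) :
    F.mass 0 / 2 ≤ F.s (4 * L ^ 2 / π) - F.s 0 := by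
  have hmass := F.mass_nonneg 0
  have hLpos : 0 < L := by linarith [F.s_pos 0]
  set T := 4 * L ^ 2 / π
  rcases le_total L (F.s T) with hLs | hsL
  · linarith
  have hlim : Tendsto (fun e => e * F.mass T + (1 + e) * F.s T - (1 + e) * F.s 0) (𝓝[>] 0)
      (𝓝 (0 * F.mass T + (1 + 0) * F.s T - (1 + 0) * F.s 0)) :=
    (Continuous.tendsto (by fun_prop) 0).mono_left nhdsWithin_le_nhds
  have hle : F.mass 0 / 2 ≤ 0 * F.mass T + (1 + 0) * F.s T - (1 + 0) * F.s 0 := by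
    refine ge_of_tendsto hlim ?_
    filter_upwards [self_mem_nhdsWithin] with e he
    linarith [F.half_mass_add_le hLpos hsL he]
  linarith

end Advance

theorem cube_mass_le_energy_zero (hp : 1 < p) :
    π ^ 2 / 256 * (F.mass 0 ^ 3 / (F.s 0 + F.mass 0) ^ 4) ≤ F.energy 0 := by
  have hmass := F.mass_nonneg 0
  have hs := F.s_pos 0
  set L := F.s 0 + F.mass 0 with hL
  have hLpos : 0 < L := by linarith
  set T := 4 * L ^ 2 / π with hT_def
  have hT : 0 < T := by positivity
  calc π ^ 2 / 256 * (F.mass 0 ^ 3 / L ^ 4) = (F.mass 0 / 2) ^ 3 / (2 * T ^ 2) := by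
        rw [hT_def]
        field_simp
        ring
    _ ≤ (F.s T - F.s 0) ^ 3 / (2 * T ^ 2) := by
        gcongr
        exact F.half_mass_le_advance hL
    _ ≤ F.energy T + (F.s T - F.s 0) ^ 3 / (2 * T ^ 2) :=
        le_add_of_nonneg_left (F.energy_nonneg hp hT)
    _ ≤ F.energy 0 := F.energy_add_cube_advance_le hp hT

end GlobalFlow

/-! ### Extension of a classical global solution to the plane -/

/-- The closed region `{0 ≤ t, 0 ≤ x ≤ s t}` below the free boundary `s`. -/
def closedDomain (s : ℝ → ℝ) : Set (ℝ × ℝ) := {q | 0 ≤ q.1 ∧ q.2 ∈ Icc 0 (s q.1)}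

/-- The retraction of the plane onto `closedDomain s` (for nonnegative `s`), truncating first the
time and then the position. Precomposing with it extends functions continuously to the plane. -/
def clampToDomain (s : ℝ → ℝ) (q : ℝ × ℝ) : ℝ × ℝ :=
  (max q.1 0, max 0 (min q.2 (s (max q.1 0))))

section Clamp

variable {s : ℝ → ℝ} {t x : ℝ}

lemma clampToDomain_mem (hs : ∀ t, 0 ≤ t → 0 < s t) (q : ℝ × ℝ) :
    clampToDomain s q ∈ closedDomain s :=
  ⟨le_max_right _ _, le_max_left _ _, max_le (hs _ (le_max_right _ _)).le (min_le_right _ _)⟩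

lemma clampToDomain_eq_self (ht : 0 ≤ t) (hx : x ∈ Icc 0 (s t)) :
    clampToDomain s (t, x) = (t, x) := by
  simp [clampToDomain, max_eq_left ht, min_eq_left hx.2, max_eq_right hx.1]

lemma continuous_comp_max_zero (hs : ContinuousOn s (Ici 0)) : Continuous fun t => s (max t 0) :=
  hs.comp_continuous (by fun_prop) fun t => mem_Ici.2 (le_max_right t 0)

lemma continuous_clampToDomain (hs : ContinuousOn s (Ici 0)) : Continuous (clampToDomain s) := by
  have hs' : Continuous fun q : ℝ × ℝ => s (max q.1 0) :=
    (continuous_comp_max_zero hs).comp continuous_fst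
  exact (continuous_fst.max continuous_const).prodMk
    (continuous_const.max (continuous_snd.min hs'))

lemma eventually_clampToDomain_eq_self (hs : ContinuousOn s (Ici 0)) (ht : 0 < t)
    (hx : x ∈ Ioo 0 (s t)) : ∀ᶠ q in 𝓝 (t, x), clampToDomain s q = q := by
  have hs' : Continuous fun q : ℝ × ℝ => s (max q.1 0) :=
    (continuous_comp_max_zero hs).comp continuous_fst
  have hlt : x < s (max t 0) := (max_eq_left ht.le).symm ▸ hx.2
  filter_upwards [continuous_fst.continuousAt.eventually_const_lt ht,
    continuous_snd.continuousAt.eventually_const_lt hx.1,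
    continuous_snd.continuousAt.eventually_lt hs'.continuousAt hlt] with q hq_time hq_pos hq_lt
  rw [max_eq_left hq_time.le] at hq_lt
  exact clampToDomain_eq_self hq_time.le ⟨hq_pos.le, hq_lt.le⟩

lemma eventually_clampToDomain_eq_self_left (hs : ContinuousOn s (Ici 0)) (ht : 0 < t)
    (hx : x ∈ Ioo 0 (s t)) : ∀ᶠ τ in 𝓝 t, clampToDomain s (τ, x) = (τ, x) :=
  (Continuous.prodMk_left x).continuousAt.eventually (eventually_clampToDomain_eq_self hs ht hx)

lemma eventually_clampToDomain_eq_self_right (hs : ContinuousOn s (Ici 0)) (ht : 0 < t)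
    (hx : x ∈ Ioo 0 (s t)) : ∀ᶠ y in 𝓝 x, clampToDomain s (t, y) = (t, y) :=
  (Continuous.prodMk_right t).continuousAt.eventually (eventually_clampToDomain_eq_self hs ht hx)

end Clamp

lemma continuousOn_of_forall_inter_le {X Y : Type*} [TopologicalSpace X] [TopologicalSpace Y]
    {f : X → Y} {h : X → ℝ} {A : Set X} (hh : Continuous h)
    (hf : ∀ T : ℝ, 0 < T → ContinuousOn f (A ∩ {q | h q ≤ T})) : ContinuousOn f A := by
  refine continuousOn_of_locally_continuousOn fun q _ =>
    ⟨{r | h r < |h q| + 1}, isOpen_lt hh continuous_const, ?_, ?_⟩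
  · exact (le_abs_self (h q)).trans_lt (lt_add_one |h q|)
  · exact (hf (|h q| + 1) (by positivity)).mono
      (inter_subset_inter_right A fun r (hr : h r < |h q| + 1) => hr.le)

namespace IsGlobalSol

variable {p s₀ T t x : ℝ} {φ s : ℝ → ℝ} {u : ℝ → ℝ → ℝ}

lemma isSolOn_self (hg : IsGlobalSol p s₀ φ s u) (ht : 0 < t) :
    IsSolOn p s₀ φ t s u ∧ t ∈ Ioc 0 t :=
  ⟨hg t ht, right_mem_Ioc.2 ht⟩

lemma s_zero (hg : IsGlobalSol p s₀ φ s u) : s 0 = s₀ :=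
  (hg 1 one_pos).init_s

lemma s_pos (hg : IsGlobalSol p s₀ φ s u) (t : ℝ) (ht : 0 ≤ t) : 0 < s t :=
  (hg (t + 1) (by linarith)).s_pos t ⟨ht, by linarith⟩

lemma initial_pos (hg : IsGlobalSol p s₀ φ s u) : 0 < s₀ :=
  hg.s_zero ▸ hg.s_pos 0 le_rfl

lemma u_nonneg (hg : IsGlobalSol p s₀ φ s u) {q : ℝ × ℝ} (hq : q ∈ closedDomain s) :
    0 ≤ u q.1 q.2 :=
  (hg (q.1 + 1) (by linarith [hq.1])).u_nonneg q.1 ⟨hq.1, by linarith⟩ q.2 hq.2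

lemma continuousOn_s (hg : IsGlobalSol p s₀ φ s u) : ContinuousOn s (Ici 0) :=
  continuousOn_of_forall_inter_le continuous_id fun T hT => (hg T hT).s_cont

lemma continuousOn_u (hg : IsGlobalSol p s₀ φ s u) :
    ContinuousOn (fun q : ℝ × ℝ => u q.1 q.2) (closedDomain s) :=
  continuousOn_of_forall_inter_le continuous_fst fun T hT =>
    (hg T hT).u_cont.mono fun _ hq => ⟨⟨hq.1.1, hq.2⟩, hq.1.2⟩

lemma continuousOn_uxx (hg : IsGlobalSol p s₀ φ s u) :
    ContinuousOn (fun q : ℝ × ℝ => deriv (deriv (u q.1)) q.2)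
      {q : ℝ × ℝ | 0 < q.1 ∧ q.2 ∈ Ioo 0 (s q.1)} :=
  continuousOn_of_forall_inter_le continuous_fst fun T hT =>
    (hg T hT).uxx_cont.mono fun _ hq => ⟨⟨hq.1.1, hq.2⟩, hq.1.2⟩

lemma continuousOn_ux (hg : IsGlobalSol p s₀ φ s u) (hT : 0 < T)
    (hreg : ContinuousOn (fun q : ℝ × ℝ => deriv (u q.1) q.2)
      {q : ℝ × ℝ | q.1 ∈ Icc 0 T ∧ q.2 ∈ Icc 0 (s q.1)}) :
    ContinuousOn (fun q : ℝ × ℝ => deriv (u q.1) q.2) (closedDomain s) := by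
  have hpos : ContinuousOn (fun q : ℝ × ℝ => deriv (u q.1) q.2)
      {q : ℝ × ℝ | 0 < q.1 ∧ q.2 ∈ Icc 0 (s q.1)} :=
    continuousOn_of_forall_inter_le continuous_fst fun T hT =>
      (hg T hT).ux_cont.mono fun _ hq => ⟨⟨hq.1.1, hq.2⟩, hq.1.2⟩
  refine continuousOn_of_locally_continuousOn fun q _ => ?_
  rcases lt_or_ge q.1 T with hlt | hge
  · exact ⟨{r | r.1 < T}, isOpen_lt continuous_fst continuous_const, hlt,
      hreg.mono fun r hr => ⟨⟨hr.1.1, le_of_lt hr.2⟩, hr.1.2⟩⟩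
  · exact ⟨{r | 0 < r.1}, isOpen_lt continuous_const continuous_fst, hT.trans_le hge,
      hpos.mono fun r hr => ⟨hr.2, hr.1.2⟩⟩

lemma hasDerivAt_s (hg : IsGlobalSol p s₀ φ s u) (ht : 0 < t) :
    HasDerivAt (fun τ => s (max τ 0)) (-deriv (u t) (s t)) t := by
  obtain ⟨hsol, ht'⟩ := hg.isSolOn_self ht
  rw [← hsol.stefan t ht']
  refine (hsol.s_diff t ht').hasDerivAt.congr_of_eventuallyEq ?_
  filter_upwards [Ioi_mem_nhds ht] with τ hτ
  rw [max_eq_left (le_of_lt hτ)]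

lemma hasDerivAt_u_time (hg : IsGlobalSol p s₀ φ s u) (ht : 0 < t) (hx : x ∈ Ioo 0 (s t)) :
    HasDerivAt (fun τ => u (clampToDomain s (τ, x)).1 (clampToDomain s (τ, x)).2)
      (deriv (deriv (u t)) x) t := by
  obtain ⟨hsol, ht'⟩ := hg.isSolOn_self ht
  rw [← hsol.heat t ht' x hx]
  refine (hsol.ut_diff t ht' x hx).hasDerivAt.congr_of_eventuallyEq ?_
  filter_upwards [eventually_clampToDomain_eq_self_left hg.continuousOn_s ht hx] with τ hτ
  rw [hτ]

lemma hasDerivAt_u (hg : IsGlobalSol p s₀ φ s u) (ht : 0 < t) (hx : x ∈ Ioo 0 (s t)) :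
    HasDerivAt (fun y => u (clampToDomain s (t, y)).1 (clampToDomain s (t, y)).2)
      (deriv (u t) x) x := by
  obtain ⟨hsol, ht'⟩ := hg.isSolOn_self ht
  refine (hsol.ux_diff t ht' x hx).hasDerivAt.congr_of_eventuallyEq ?_
  filter_upwards [eventually_clampToDomain_eq_self_right hg.continuousOn_s ht hx] with y hy
  rw [hy]

lemma hasDerivAt_ux (hg : IsGlobalSol p s₀ φ s u) (ht : 0 < t) (hx : x ∈ Ioo 0 (s t)) :
    HasDerivAt (fun y => deriv (u (clampToDomain s (t, y)).1) (clampToDomain s (t, y)).2)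
      (deriv (deriv (u t)) x) x := by
  obtain ⟨hsol, ht'⟩ := hg.isSolOn_self ht
  refine (hsol.uxx_diff t ht' x hx).hasDerivAt.congr_of_eventuallyEq ?_
  filter_upwards [eventually_clampToDomain_eq_self_right hg.continuousOn_s ht hx] with y hy
  rw [hy]

/-- The flow of a global classical solution whose gradient is continuous up to `t = 0`, extended
to the plane by clamping the arguments to the domain. -/
def toGlobalFlow (hg : IsGlobalSol p s₀ φ s u) (hT : 0 < T)
    (hreg : ContinuousOn (fun q : ℝ × ℝ => deriv (u q.1) q.2)
      {q : ℝ × ℝ | q.1 ∈ Icc 0 T ∧ q.2 ∈ Icc 0 (s q.1)}) : GlobalFlow p where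
  s t := s (max t 0)
  u t x := u (clampToDomain s (t, x)).1 (clampToDomain s (t, x)).2
  ux t x := deriv (u (clampToDomain s (t, x)).1) (clampToDomain s (t, x)).2
  uxx t x := deriv (deriv (u t)) x
  continuous_s := continuous_comp_max_zero hg.continuousOn_s
  continuous_u := hg.continuousOn_u.comp_continuous (continuous_clampToDomain hg.continuousOn_s)
    (clampToDomain_mem hg.s_pos)
  continuous_ux := (hg.continuousOn_ux hT hreg).comp_continuous
    (continuous_clampToDomain hg.continuousOn_s) (clampToDomain_mem hg.s_pos)
  s_pos _ := hg.s_pos _ (le_max_right _ _)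
  u_nonneg t x := hg.u_nonneg (clampToDomain_mem hg.s_pos (t, x))
  hasDerivAt_s t ht := by
    simpa only [max_eq_left ht.le,
      clampToDomain_eq_self ht.le (right_mem_Icc.2 (hg.s_pos t ht.le).le)] using hg.hasDerivAt_s ht
  hasDerivAt_u_time t ht x hx := by
    rw [max_eq_left ht.le] at hx
    exact hg.hasDerivAt_u_time ht hx
  hasDerivAt_u t ht x hx := by
    rw [max_eq_left ht.le] at hx
    simpa only [clampToDomain_eq_self ht.le (Ioo_subset_Icc_self hx)] using hg.hasDerivAt_u ht hx
  hasDerivAt_ux t ht x hx := by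
    rw [max_eq_left ht.le] at hx
    exact hg.hasDerivAt_ux ht hx
  continuousOn_uxx := hg.continuousOn_uxx.mono fun q hq => by
    have hx := hq.2
    rw [max_eq_left hq.1.le] at hx
    exact ⟨hq.1, hx⟩
  ux_zero t ht := by
    obtain ⟨hsol, ht'⟩ := hg.isSolOn_self ht
    rw [clampToDomain_eq_self ht.le (left_mem_Icc.2 (hg.s_pos t ht.le).le),
      ← hsol.bc_zero t ht', neg_neg]
  u_boundary t ht := by
    obtain ⟨hsol, ht'⟩ := hg.isSolOn_self ht
    rw [max_eq_left ht.le, clampToDomain_eq_self ht.le (right_mem_Icc.2 (hg.s_pos t ht.le).le)]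
    exact hsol.bc_free t ht'

section InitialData

variable (hg : IsGlobalSol p s₀ φ s u) (hT : 0 < T)
  (hreg : ContinuousOn (fun q : ℝ × ℝ => deriv (u q.1) q.2)
    {q : ℝ × ℝ | q.1 ∈ Icc 0 T ∧ q.2 ∈ Icc 0 (s q.1)})

lemma toGlobalFlow_s_zero : (hg.toGlobalFlow hT hreg).s 0 = s₀ := by
  simp only [toGlobalFlow, max_self, hg.s_zero]

lemma toGlobalFlow_u_zero (hx : x ∈ Icc 0 s₀) : (hg.toGlobalFlow hT hreg).u 0 x = φ x := by
  rw [← (hg 1 one_pos).init x hx]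
  rw [← hg.s_zero] at hx
  simp only [toGlobalFlow, clampToDomain_eq_self le_rfl hx]

lemma toGlobalFlow_ux_zero (hx : x ∈ Ioo 0 s₀) :
    (hg.toGlobalFlow hT hreg).ux 0 x = deriv φ x := by
  have hinit : u 0 =ᶠ[𝓝 x] φ := by
    filter_upwards [isOpen_Ioo.mem_nhds hx] with y hy
    exact (hg 1 one_pos).init y (Ioo_subset_Icc_self hy)
  rw [← hinit.deriv_eq]
  rw [← hg.s_zero] at hx
  simp only [toGlobalFlow, clampToDomain_eq_self le_rfl (Ioo_subset_Icc_self hx)]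

lemma toGlobalFlow_mass_zero : (hg.toGlobalFlow hT hreg).mass 0 = ∫ x in (0 : ℝ)..s₀, φ x := by
  rw [GlobalFlow.mass, hg.toGlobalFlow_s_zero hT hreg]
  refine intervalIntegral.integral_congr fun x hx => ?_
  rw [uIcc_of_le hg.initial_pos.le] at hx
  exact hg.toGlobalFlow_u_zero hT hreg hx

lemma toGlobalFlow_energy_zero : (hg.toGlobalFlow hT hreg).energy 0 =
    1 / 2 * (∫ x in (0 : ℝ)..s₀, deriv φ x ^ 2) - φ 0 ^ (p + 1) / (p + 1) := by
  have hs₀ := hg.initial_pos.le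
  have hgrad : ∫ x in (0 : ℝ)..s₀, (hg.toGlobalFlow hT hreg).ux 0 x ^ 2 =
      ∫ x in (0 : ℝ)..s₀, deriv φ x ^ 2 := by
    simp only [intervalIntegral.integral_of_le hs₀, integral_Ioc_eq_integral_Ioo]
    exact setIntegral_congr_fun measurableSet_Ioo fun x hx => by
      simp only [hg.toGlobalFlow_ux_zero hT hreg hx]
  rw [GlobalFlow.energy, hg.toGlobalFlow_s_zero hT hreg, hgrad,
    hg.toGlobalFlow_u_zero hT hreg (left_mem_Icc.2 hs₀)]

end InitialData

end IsGlobalSol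

/-- Proposition 3.1: sufficient condition for finite-time blow-up. -/
theorem stmt_11 (p : ℝ) (hp : 1 < p) (s₀ : ℝ) (φ : ℝ → ℝ) (hW : memW s₀ φ)
    (s : ℝ → ℝ) (u : ℝ → ℝ → ℝ) (Tm : ℝ≥0∞) (hmax : IsMaxSol p s₀ φ Tm s u)
    (T : ℝ) (hT : 0 < T) (hTlt : ENNReal.ofReal T < Tm)
    (hreg : ContinuousOn (fun q : ℝ × ℝ => deriv (u q.1) q.2)
      {q : ℝ × ℝ | q.1 ∈ Icc 0 T ∧ q.2 ∈ Icc 0 (s q.1)})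
    (hE : 1 / 2 * (∫ x in (0:ℝ)..s₀, (deriv φ x) ^ 2) - φ 0 ^ (p + 1) / (p + 1) <
      π ^ 2 / 256 * (∫ x in (0:ℝ)..s₀, φ x) ^ 3 / (s₀ + ∫ x in (0:ℝ)..s₀, φ x) ^ 4) :
    Tm < ⊤ := by
  rw [lt_top_iff_ne_top]
  rintro rfl
  have hg : IsGlobalSol p s₀ φ s u := fun T hT => hmax.2.1 T hT ENNReal.ofReal_lt_top
  have hbound := (hg.toGlobalFlow hT hreg).cube_mass_le_energy_zero hp
  rw [hg.toGlobalFlow_s_zero, hg.toGlobalFlow_mass_zero, hg.toGlobalFlow_energy_zero,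
    ← mul_div_assoc] at hbound
  exact hE.not_ge hbound
end
end

section
/- Let (s,u) be a global-in-time solution of problem (P) with initial data (s₀,φ) ∈ W. Then ∫₀^∞ s'(t)³ dt ≥ (1/128) · π² ‖φ‖_{L¹}³ / (s₀ + ‖φ‖_{L¹})⁴. -/
open Set MeasureTheory Filter Topology Real
open scoped ENNReal

noncomputable section

/-!
Write `A = ∫ φ`, `L = s₀ + A`, and test the equation against the positive part of the polynomial
`q(t,x) = L² + x² - 2t`, which solves the backward heat equation. In Green's formula the edge of
`{q > 0}` and the boundary condition at `x = 0` contribute with a favourable sign, while the free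
boundary costs at most `2L² s'(t)` as long as `s ≤ L`; hence `∫ u q⁺ dx + 2L² s` is nondecreasing.
The integral is at least `L² A` at `t = 0` and vanishes at `t = L²`, so the free boundary advances
by at least `A / 2` up to time `L²` (trivially so if it has already passed `L`). Hölder's inequality
turns `∫₀^{L²} s' ≥ A / 2` into `∫₀^{L²} (s')³ ≥ (A / 2)³ / L⁴`, and `π² / 128 ≤ 1 / 8`.
-/

section Calculus

lemma monotoneOn_of_exists_right_minorant {f : ℝ → ℝ} {a b : ℝ} (hf : ContinuousOn f (Icc a b))
    (hminorant : ∀ t ∈ Ioo a b, ∃ (g : ℝ → ℝ) (g' : ℝ), HasDerivWithinAt g g' (Ioi t) t ∧ 0 ≤ g' ∧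
      ∀ᶠ z in 𝓝[>] t, g z - g t ≤ f z - f t) :
    MonotoneOn f (Icc a b) := by
  intro x hx y hy hxy
  rcases hxy.eq_or_lt with rfl | hxy
  · exact le_rfl
  have le_of_mem_Ioo : ∀ c ∈ Ioo x y, f c ≤ f y := by
    intro c hc
    refine neg_le_neg_iff.1 (image_le_of_liminf_slope_right_le_deriv_boundary (f := fun t => -f t)
      (B := fun _ => -f c) (B' := fun _ => 0)
      (hf.neg.mono (Icc_subset_Icc (hx.1.trans hc.1.le) hy.2)) le_rfl continuousOn_const
      (fun _ _ => hasDerivWithinAt_const _ _ _) ?_ (right_mem_Icc.2 hc.2.le))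
    intro t ht r hr
    obtain ⟨g, g', hg, hg', hgf⟩ := hminorant t
      ⟨hx.1.trans_lt (hc.1.trans_le ht.1), ht.2.trans_le hy.2⟩
    rw [hasDerivWithinAt_iff_tendsto_slope' self_notMem_Ioi] at hg
    refine Eventually.frequently ?_
    filter_upwards [hg.eventually (lt_mem_nhds ((neg_lt_zero.2 hr).trans_le hg')), hgf,
      self_mem_nhdsWithin] with z hslope hz htz
    have hzt : 0 < z - t := sub_pos.2 htz
    rw [slope_def_field, lt_div_iff₀ hzt] at hslope
    rw [slope_def_field, div_lt_iff₀ hzt]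
    linarith
  have hlim : Tendsto f (𝓝[Ioo x y] x) (𝓝 (f x)) :=
    (hf x hx).mono_left (nhdsWithin_mono x (Ioo_subset_Icc_self.trans (Icc_subset_Icc hx.1 hy.2)))
  have := left_nhdsWithin_Ioo_neBot hxy
  exact le_of_tendsto hlim (eventually_mem_nhdsWithin.mono le_of_mem_Ioo)

lemma nonpos_of_hasDerivWithinAt_Iic_of_le {f : ℝ → ℝ} {f' b : ℝ}
    (hf : HasDerivWithinAt f f' (Iic b) b) (hmin : ∀ᶠ x in 𝓝[<] b, f b ≤ f x) : f' ≤ 0 := by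
  have hslope := hf.mono Iio_subset_Iic_self
  rw [hasDerivWithinAt_iff_tendsto_slope' self_notMem_Iio] at hslope
  refine le_of_tendsto hslope ?_
  filter_upwards [hmin, self_mem_nhdsWithin] with x hx hxb
  rw [slope_def_field]
  exact div_nonpos_of_nonneg_of_nonpos (sub_nonneg.2 hx) (sub_nonpos.2 (le_of_lt hxb))

lemma lintegral_ofReal_deriv_eq_of_nonneg {f : ℝ → ℝ} {a b : ℝ} (hab : a ≤ b)
    (hf : ContinuousOn f (Icc a b)) (hdiff : ∀ x ∈ Ioc a b, DifferentiableAt ℝ f x)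
    (hnonneg : ∀ x ∈ Ioc a b, 0 ≤ deriv f x) :
    ∫⁻ x in Ioc a b, ENNReal.ofReal (deriv f x) = ENNReal.ofReal (f b - f a) := by
  have hderiv : ∀ x ∈ Ioo a b, HasDerivAt f (deriv f x) x :=
    fun x hx => (hdiff x (Ioo_subset_Ioc_self hx)).hasDerivAt
  have hint : IntegrableOn (deriv f) (Ioc a b) :=
    intervalIntegral.integrableOn_deriv_of_nonneg hf hderiv
      fun x hx => hnonneg x (Ioo_subset_Ioc_self hx)
  rw [← ofReal_integral_eq_lintegral_ofReal hint
      ((ae_restrict_iff' measurableSet_Ioc).2 (ae_of_all _ hnonneg)),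
    ← intervalIntegral.integral_of_le hab,
    intervalIntegral.integral_eq_sub_of_hasDerivAt_of_le hab hf hderiv
      ((intervalIntegrable_iff_integrableOn_Ioc_of_le hab).2 hint)]

lemma lintegral_pow_le_lintegral_pow_mul_measure_univ {α : Type*} [MeasurableSpace α]
    {μ : Measure α} {f : α → ℝ≥0∞} (hf : AEMeasurable f μ) (n : ℕ) :
    (∫⁻ x, f x ∂μ) ^ (n + 1) ≤ (∫⁻ x, f x ^ (n + 1) ∂μ) * μ univ ^ n := by
  have hn : (0 : ℝ) < n + 1 := by positivity
  have hölder := eLpNorm'_le_eLpNorm'_mul_rpow_measure_univ (q := n + 1) one_pos (by simp)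
    hf.aestronglyMeasurable
  rw [eLpNorm'_eq_lintegral_enorm, eLpNorm'_eq_lintegral_enorm] at hölder
  calc (∫⁻ x, f x ∂μ) ^ (n + 1)
      = ((∫⁻ x, ‖f x‖ₑ ^ (1 : ℝ) ∂μ) ^ (1 / 1 : ℝ)) ^ (n + 1) := by simp
    _ ≤ ((∫⁻ x, ‖f x‖ₑ ^ (n + 1 : ℝ) ∂μ) ^ (1 / (n + 1) : ℝ)
          * μ univ ^ (1 / 1 - 1 / (n + 1) : ℝ)) ^ (n + 1) := by gcongr
    _ = (∫⁻ x, f x ^ (n + 1) ∂μ) * μ univ ^ n := by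
      rw [mul_pow, ← ENNReal.rpow_mul_natCast, ← ENNReal.rpow_mul_natCast]
      push_cast
      have hexp : (1 / 1 - 1 / (n + 1) : ℝ) * (n + 1) = n := by field_simp; ring
      rw [one_div_mul_cancel hn.ne', hexp, ENNReal.rpow_one, ENNReal.rpow_natCast]
      simp only [enorm_eq_self, ← ENNReal.rpow_natCast, Nat.cast_add, Nat.cast_one]

lemma continuousOn_intervalIntegral_of_continuousOn {X E : Type*} [TopologicalSpace X]
    [NormedAddCommGroup E] [NormedSpace ℝ E] {K : Set X} {F : X → ℝ → E} {a : ℝ} {r : X → ℝ}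
    (hr : ContinuousOn r K) (har : ∀ t ∈ K, a ≤ r t)
    (hF : ContinuousOn (Function.uncurry F) {q | q.1 ∈ K ∧ q.2 ∈ Icc a (r q.1)}) :
    ContinuousOn (fun t => ∫ x in a..r t, F t x) K := by
  rw [continuousOn_iff_continuous_domRestrict] at hr ⊢
  have hclamp : Continuous (Function.uncurry fun (t : K) x => F t (max a (min x (r t)))) := by
    refine hF.comp_continuous (f := fun q : K × ℝ => ((q.1 : X), max a (min q.2 (r q.1)))) ?_ ?_
    · exact (continuous_subtype_val.comp continuous_fst).prodMk
        (continuous_const.max (continuous_snd.min (hr.comp continuous_fst)))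
    · exact fun q => ⟨q.1.2, le_max_left _ _, max_le (har _ q.1.2) (min_le_right _ _)⟩
  refine (intervalIntegral.continuous_parametric_intervalIntegral_of_continuous (a₀ := a)
    (μ := volume) hclamp hr).congr fun t => ?_
  refine intervalIntegral.integral_congr fun x hx => ?_
  rw [domRestrict_apply, uIcc_of_le (har t t.2)] at hx
  exact congrArg (F t) (by rw [min_eq_left hx.2, max_eq_right hx.1])

variable {w B g : ℝ → ℝ → ℝ} {t z a b m y : ℝ}

lemma integral_sub_eq_integral_flux_sub_of_continuousOn (htz : t ≤ z)
    (hg : ContinuousOn (Function.uncurry g) (Icc t z ×ˢ uIcc a b))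
    (hw : ∀ τ ∈ Icc t z, ∀ x ∈ uIcc a b, HasDerivAt (w · x) (g τ x) τ)
    (hB : ∀ τ ∈ Icc t z, ∀ x ∈ uIcc a b, HasDerivAt (B τ) (g τ x) x) :
    ∫ x in a..b, (w z x - w t x) = ∫ τ in t..z, (B τ b - B τ a) := by
  have hg_swap : ContinuousOn (fun q : ℝ × ℝ => g q.2 q.1) (uIcc a b ×ˢ Icc t z) :=
    hg.comp continuous_swap.continuousOn fun q hq => ⟨hq.2, hq.1⟩
  have hint : Integrable (Function.uncurry fun x τ => g τ x)
      ((volume.restrict (uIoc a b)).prod (volume.restrict (Ioc t z))) := by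
    rw [Measure.prod_restrict]
    exact (hg_swap.integrableOn_compact (isCompact_uIcc.prod isCompact_Icc)).mono_set
      (prod_mono uIoc_subset_uIcc Ioc_subset_Icc_self)
  calc ∫ x in a..b, (w z x - w t x)
      = ∫ x in a..b, ∫ τ in t..z, g τ x := intervalIntegral.integral_congr fun x hx =>
        (intervalIntegral.integral_eq_sub_of_hasDerivAt (f := (w · x))
          (fun τ hτ => hw τ (uIcc_of_le htz ▸ hτ) x hx)
          ((hg.uncurry_right x hx).intervalIntegrable_of_Icc htz)).symm
    _ = ∫ τ in t..z, ∫ x in a..b, g τ x := by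
        simp only [intervalIntegral.integral_of_le htz]
        exact intervalIntegral_integral_swap hint
    _ = ∫ τ in t..z, (B τ b - B τ a) := intervalIntegral.integral_congr fun τ hτ => by
        rw [uIcc_of_le htz] at hτ
        exact intervalIntegral.integral_eq_sub_of_hasDerivAt (hB τ hτ)
          (hg.uncurry_left τ hτ).intervalIntegrable

-- Both sides are continuous in `y`, so the identity extends from `Ioo a b` to its closure.
lemma integral_sub_eq_integral_flux_sub_of_mem_Ioo (htz : t ≤ z)
    (hwc : ContinuousOn (Function.uncurry w) (Icc t z ×ˢ Icc a b))
    (hBc : ContinuousOn (Function.uncurry B) (Icc t z ×ˢ Icc a b))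
    (hgc : ContinuousOn (Function.uncurry g) (Icc t z ×ˢ Ioo a b))
    (hw : ∀ τ ∈ Icc t z, ∀ x ∈ Ioo a b, HasDerivAt (w · x) (g τ x) τ)
    (hB : ∀ τ ∈ Icc t z, ∀ x ∈ Ioo a b, HasDerivAt (B τ) (g τ x) x)
    (hm : m ∈ Ioo a b) (hy : y ∈ Icc a b) :
    ∫ x in m..y, (w z x - w t x) = ∫ τ in t..z, (B τ y - B τ m) := by
  have hab : a < b := hm.1.trans hm.2
  have hm' : m ∈ Icc a b := Ioo_subset_Icc_self hm
  have hΔw : IntervalIntegrable (fun x => w z x - w t x) volume a b :=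
    ((hwc.uncurry_left z (right_mem_Icc.2 htz)).sub
      (hwc.uncurry_left t (left_mem_Icc.2 htz))).intervalIntegrable_of_Icc hab.le
  have hleft : ContinuousOn (fun y => ∫ x in m..y, (w z x - w t x)) (Icc a b) := by
    rw [← uIcc_of_le hab.le] at hm' ⊢
    exact intervalIntegral.continuousOn_primitive_interval' hΔw hm'
  have hright : ContinuousOn (fun y => ∫ τ in t..z, (B τ y - B τ m)) (Icc a b) := by
    refine continuousOn_intervalIntegral_of_continuousOn continuousOn_const (fun _ _ => htz) ?_
    exact (hBc.comp continuous_swap.continuousOn fun q hq => ⟨hq.2, hq.1⟩).sub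
      ((hBc.uncurry_right m hm').comp continuousOn_snd fun q hq => hq.2)
  refine EqOn.of_subset_closure (fun y hy => ?_) hleft hright Ioo_subset_Icc_self
    (closure_Ioo hab.ne).superset hy
  have hsub : uIcc m y ⊆ Ioo a b := ordConnected_Ioo.uIcc_subset hm hy
  exact integral_sub_eq_integral_flux_sub_of_continuousOn htz (hgc.mono (prod_mono_right hsub))
    (fun τ hτ x hx => hw τ hτ x (hsub hx)) fun τ hτ x hx => hB τ hτ x (hsub hx)

lemma integral_sub_eq_integral_flux_sub (htz : t ≤ z) (hab : a < b)
    (hwc : ContinuousOn (Function.uncurry w) (Icc t z ×ˢ Icc a b))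
    (hBc : ContinuousOn (Function.uncurry B) (Icc t z ×ˢ Icc a b))
    (hgc : ContinuousOn (Function.uncurry g) (Icc t z ×ˢ Ioo a b))
    (hw : ∀ τ ∈ Icc t z, ∀ x ∈ Ioo a b, HasDerivAt (w · x) (g τ x) τ)
    (hB : ∀ τ ∈ Icc t z, ∀ x ∈ Ioo a b, HasDerivAt (B τ) (g τ x) x) :
    ∫ x in a..b, (w z x - w t x) = ∫ τ in t..z, (B τ b - B τ a) := by
  obtain ⟨m, hm⟩ := nonempty_Ioo.2 hab
  have hm' : m ∈ Icc a b := Ioo_subset_Icc_self hm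
  have ha : a ∈ Icc a b := left_mem_Icc.2 hab.le
  have hb : b ∈ Icc a b := right_mem_Icc.2 hab.le
  have hΔw_int : ∀ y ∈ Icc a b, IntervalIntegrable (fun x => w z x - w t x) volume m y :=
    fun y hy => (((hwc.uncurry_left z (right_mem_Icc.2 htz)).sub
      (hwc.uncurry_left t (left_mem_Icc.2 htz))).mono (uIcc_subset_Icc hm' hy)).intervalIntegrable
  have hB_int : ∀ y ∈ Icc a b, IntervalIntegrable (fun τ => B τ y - B τ m) volume t z :=
    fun y hy => ((hBc.uncurry_right y hy).sub
      (hBc.uncurry_right m hm')).intervalIntegrable_of_Icc htz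
  calc ∫ x in a..b, (w z x - w t x)
      = (∫ x in m..b, (w z x - w t x)) - ∫ x in m..a, (w z x - w t x) :=
        (intervalIntegral.integral_interval_sub_left (hΔw_int b hb) (hΔw_int a ha)).symm
    _ = (∫ τ in t..z, (B τ b - B τ m)) - ∫ τ in t..z, (B τ a - B τ m) := by
        rw [integral_sub_eq_integral_flux_sub_of_mem_Ioo htz hwc hBc hgc hw hB hm hb,
          integral_sub_eq_integral_flux_sub_of_mem_Ioo htz hwc hBc hgc hw hB hm ha]
    _ = ∫ τ in t..z, (B τ b - B τ a) := by
        rw [← intervalIntegral.integral_sub (hB_int b hb) (hB_int a ha)]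
        simp only [sub_sub_sub_cancel_right]

lemma ofReal_sub_pow_div_le_lintegral_ofReal_deriv_pow {f : ℝ → ℝ} {a b : ℝ} (hab : a < b)
    (hf : ContinuousOn f (Icc a b)) (hdiff : ∀ x ∈ Ioc a b, DifferentiableAt ℝ f x)
    (hnonneg : ∀ x ∈ Ioc a b, 0 ≤ deriv f x) (n : ℕ) :
    ENNReal.ofReal ((f b - f a) ^ (n + 1) / (b - a) ^ n) ≤
      ∫⁻ x in Ioc a b, ENNReal.ofReal (deriv f x ^ (n + 1)) := by
  have hba : 0 < b - a := sub_pos.2 hab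
  have hfab : 0 ≤ f b - f a := by
    refine sub_nonneg.2 (monotoneOn_of_deriv_nonneg (convex_Icc a b) hf ?_ ?_
      (left_mem_Icc.2 hab.le) (right_mem_Icc.2 hab.le) hab.le) <;> rw [interior_Icc]
    · exact fun x hx => (hdiff x (Ioo_subset_Ioc_self hx)).differentiableWithinAt
    · exact fun x hx => hnonneg x (Ioo_subset_Ioc_self hx)
  rw [ENNReal.ofReal_div_of_pos (pow_pos hba n)]
  refine ENNReal.div_le_of_le_mul ?_
  calc ENNReal.ofReal ((f b - f a) ^ (n + 1))
      = (∫⁻ x in Ioc a b, ENNReal.ofReal (deriv f x)) ^ (n + 1) := by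
        rw [lintegral_ofReal_deriv_eq_of_nonneg hab.le hf hdiff hnonneg, ENNReal.ofReal_pow hfab]
    _ ≤ (∫⁻ x in Ioc a b, ENNReal.ofReal (deriv f x) ^ (n + 1)) * volume (Ioc a b) ^ n := by
        simpa only [Measure.restrict_apply_univ] using
          lintegral_pow_le_lintegral_pow_mul_measure_univ (μ := volume.restrict (Ioc a b))
            (measurable_deriv f).ennreal_ofReal.aemeasurable n
    _ = (∫⁻ x in Ioc a b, ENNReal.ofReal (deriv f x ^ (n + 1))) *
          ENNReal.ofReal ((b - a) ^ n) := by
        rw [Real.volume_Ioc, ENNReal.ofReal_pow hba.le]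
        congr 1
        exact setLIntegral_congr_fun measurableSet_Ioc fun x hx =>
          (ENNReal.ofReal_pow (hnonneg x hx) _).symm

lemma hasDerivWithinAt_integral_Ioi_of_continuousOn {E : Type*} [NormedAddCommGroup E]
    [NormedSpace ℝ E] [CompleteSpace E] {f : ℝ → E} {a b : ℝ} (hab : a < b)
    (hf : ContinuousOn f (Icc a b)) :
    HasDerivWithinAt (fun z => ∫ x in a..z, f x) (f a) (Ioi a) a := by
  have hmem : Icc a b ∈ 𝓝[>] a := Icc_mem_nhdsGT hab
  exact (intervalIntegral.integral_hasDerivWithinAt_right (s := Ici a) (t := Ioi a)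
    IntervalIntegrable.refl ⟨_, hmem, hf.aestronglyMeasurable measurableSet_Icc⟩
    ((hf a (left_mem_Icc.2 hab.le)).mono_of_mem_nhdsWithin hmem)).mono Ioi_subset_Ici_self

end Calculus

section TestFunction

variable {L t x : ℝ}

/-- The polynomial `L² + x² - 2t`, a solution of the backward heat equation, whose positive part
serves as test function. For `x ≥ 0` it is nonnegative exactly when `√(2t - L²) ≤ x`, where
`Real.sqrt` of a negative number is `0`. -/
def backwardCaloric (L t x : ℝ) : ℝ := L ^ 2 + x ^ 2 - 2 * t

lemma continuous_backwardCaloric (L : ℝ) :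
    Continuous (Function.uncurry (backwardCaloric L)) := by
  unfold backwardCaloric Function.uncurry
  fun_prop

lemma hasDerivAt_backwardCaloric_time (L t x : ℝ) :
    HasDerivAt (backwardCaloric L · x) (-2) t :=
  (((hasDerivAt_id t).const_mul 2).const_sub (L ^ 2 + x ^ 2)).congr_deriv (by simp)

lemma hasDerivAt_backwardCaloric (L t x : ℝ) :
    HasDerivAt (backwardCaloric L t) (2 * x) x :=
  (((hasDerivAt_pow 2 x).const_add (L ^ 2)).sub_const (2 * t)).congr_deriv (by simp)

lemma backwardCaloric_nonneg (hx : √(2 * t - L ^ 2) ≤ x) : 0 ≤ backwardCaloric L t x := by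
  have := (Real.sqrt_le_iff.1 hx).2
  unfold backwardCaloric
  linarith

lemma backwardCaloric_nonpos (hx₀ : 0 ≤ x) (hx : x ≤ √(2 * t - L ^ 2)) (ht : L ^ 2 ≤ 2 * t) :
    backwardCaloric L t x ≤ 0 := by
  have := (Real.le_sqrt hx₀ (sub_nonneg.2 ht)).1 hx
  unfold backwardCaloric
  linarith

lemma backwardCaloric_le_two_mul_sq (ht : 0 ≤ t) (hx₀ : 0 ≤ x) (hx : x ≤ L) :
    backwardCaloric L t x ≤ 2 * L ^ 2 := by
  have := pow_le_pow_left₀ hx₀ hx 2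
  unfold backwardCaloric
  linarith

/-- The flux `u_x q - u q_x` of Green's formula for `q = backwardCaloric L`. -/
def flux (L : ℝ) (u : ℝ → ℝ → ℝ) (t x : ℝ) : ℝ :=
  deriv (u t) x * backwardCaloric L t x - u t x * (2 * x)

/-- The integral of `u(t,·)` against the positive part of `backwardCaloric L t`. -/
def weightedMass (L : ℝ) (s : ℝ → ℝ) (u : ℝ → ℝ → ℝ) (t : ℝ) : ℝ :=
  ∫ x in (0 : ℝ)..s t, u t x * max (backwardCaloric L t x) 0

lemma integral_mul_max_backwardCaloric_eq_zero (v : ℝ → ℝ) {b : ℝ} (hb₀ : 0 ≤ b)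
    (hb : b ≤ √(2 * t - L ^ 2)) : ∫ x in (0 : ℝ)..b, v x * max (backwardCaloric L t x) 0 = 0 := by
  rcases le_or_gt (L ^ 2) (2 * t) with ht | ht
  · refine intervalIntegral.integral_zero_ae (ae_of_all _ fun x hx => ?_)
    rw [uIoc_of_le hb₀] at hx
    rw [max_eq_right (backwardCaloric_nonpos hx.1.le (hx.2.trans hb) ht), mul_zero]
  · rw [Real.sqrt_eq_zero_of_nonpos (by linarith)] at hb
    rw [le_antisymm hb hb₀, intervalIntegral.integral_same]

end TestFunction

namespace IsSolOn

variable {p s₀ T : ℝ} {φ s : ℝ → ℝ} {u : ℝ → ℝ → ℝ}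

lemma mono_time {T' : ℝ} (h : IsSolOn p s₀ φ T s u) (hT' : 0 < T') (hle : T' ≤ T) :
    IsSolOn p s₀ φ T' s u := by
  have hIcc : Icc 0 T' ⊆ Icc 0 T := Icc_subset_Icc_right hle
  have hIoc : Ioc 0 T' ⊆ Ioc 0 T := Ioc_subset_Ioc_right hle
  exact
    { T_pos := hT'
      s_cont := h.s_cont.mono hIcc
      s_diff := fun t ht => h.s_diff t (hIoc ht)
      s_deriv_cont := h.s_deriv_cont.mono hIoc
      s_pos := fun t ht => h.s_pos t (hIcc ht)
      ut_diff := fun t ht => h.ut_diff t (hIoc ht)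
      ux_diff := fun t ht => h.ux_diff t (hIoc ht)
      uxx_diff := fun t ht => h.uxx_diff t (hIoc ht)
      ut_cont := h.ut_cont.mono fun _ hq => ⟨hIoc hq.1, hq.2⟩
      uxx_cont := h.uxx_cont.mono fun _ hq => ⟨hIoc hq.1, hq.2⟩
      ux_cont := h.ux_cont.mono fun _ hq => ⟨hIoc hq.1, hq.2⟩
      u_cont := h.u_cont.mono fun _ hq => ⟨hIcc hq.1, hq.2⟩
      u_nonneg := fun t ht => h.u_nonneg t (hIcc ht)
      heat := fun t ht => h.heat t (hIoc ht)
      bc_zero := fun t ht => h.bc_zero t (hIoc ht)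
      bc_free := fun t ht => h.bc_free t (hIoc ht)
      stefan := fun t ht => h.stefan t (hIoc ht)
      init := h.init
      init_s := h.init_s }

lemma continuousOn_apply (h : IsSolOn p s₀ φ T s u) {t : ℝ} (ht : t ∈ Icc 0 T) :
    ContinuousOn (u t) (Icc 0 (s t)) :=
  h.u_cont.comp (Continuous.prodMk_right t).continuousOn fun _ hx => ⟨ht, hx⟩

lemma continuousOn_deriv_apply (h : IsSolOn p s₀ φ T s u) {t : ℝ} (ht : t ∈ Ioc 0 T) :
    ContinuousOn (deriv (u t)) (Icc 0 (s t)) :=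
  h.ux_cont.comp (Continuous.prodMk_right t).continuousOn fun _ hx => ⟨ht, hx⟩

lemma s₀_pos (h : IsSolOn p s₀ φ T s u) : 0 < s₀ :=
  h.init_s ▸ h.s_pos 0 (left_mem_Icc.2 h.T_pos.le)

lemma integral_initial_nonneg (h : IsSolOn p s₀ φ T s u) : 0 ≤ ∫ x in (0 : ℝ)..s₀, φ x := by
  refine intervalIntegral.integral_nonneg h.s₀_pos.le fun x hx => ?_
  rw [← h.init x hx]
  exact h.u_nonneg 0 (left_mem_Icc.2 h.T_pos.le) x (h.init_s ▸ hx)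

lemma deriv_freeBoundary_nonneg (h : IsSolOn p s₀ φ T s u) {t : ℝ} (ht : t ∈ Ioc 0 T) :
    0 ≤ deriv s t := by
  have htT : t ∈ Icc 0 T := Ioc_subset_Icc_self ht
  have hst : 0 < s t := h.s_pos t htT
  have hs_mem : s t ∈ Icc 0 (s t) := right_mem_Icc.2 hst.le
  have hux : HasDerivWithinAt (u t) (deriv (u t) (s t)) (Iic (s t)) (s t) :=
    hasDerivWithinAt_Iic_of_tendsto_deriv (s := Ioo 0 (s t))
      (fun x hx => (h.ux_diff t ht x hx).differentiableWithinAt)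
      ((h.continuousOn_apply htT (s t) hs_mem).mono Ioo_subset_Icc_self)
      (Ioo_mem_nhdsLT hst)
      ((h.continuousOn_deriv_apply ht (s t) hs_mem).mono_of_mem_nhdsWithin (Icc_mem_nhdsLT hst))
  have hux_nonpos : deriv (u t) (s t) ≤ 0 := by
    refine nonpos_of_hasDerivWithinAt_Iic_of_le hux ?_
    filter_upwards [Icc_mem_nhdsLT hst] with x hx
    rw [h.bc_free t ht]
    exact h.u_nonneg t htT x hx
  rw [h.stefan t ht]
  exact neg_nonneg.2 hux_nonpos

lemma monotoneOn_freeBoundary (h : IsSolOn p s₀ φ T s u) : MonotoneOn s (Icc 0 T) := by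
  refine monotoneOn_of_deriv_nonneg (convex_Icc 0 T) h.s_cont ?_ ?_ <;> rw [interior_Icc]
  · exact fun t ht => (h.s_diff t (Ioo_subset_Ioc_self ht)).differentiableWithinAt
  · exact fun t ht => h.deriv_freeBoundary_nonneg (Ioo_subset_Ioc_self ht)

variable {L : ℝ}

lemma continuousOn_flux (h : IsSolOn p s₀ φ T s u) (L : ℝ) :
    ContinuousOn (Function.uncurry (flux L u)) {q | q.1 ∈ Ioc 0 T ∧ q.2 ∈ Icc 0 (s q.1)} := by
  have hu := h.u_cont.mono fun q (hq : q.1 ∈ Ioc 0 T ∧ q.2 ∈ Icc 0 (s q.1)) =>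
    ⟨Ioc_subset_Icc_self hq.1, hq.2⟩
  exact (h.ux_cont.mul (continuous_backwardCaloric L).continuousOn).sub
    (hu.mul (continuousOn_snd.const_mul 2))

lemma hasDerivAt_mul_backwardCaloric_time (h : IsSolOn p s₀ φ T s u) {t x : ℝ} (ht : t ∈ Ioc 0 T)
    (hx : x ∈ Ioo 0 (s t)) :
    HasDerivAt (fun τ => u τ x * backwardCaloric L τ x)
      (deriv (fun τ => u τ x) t * backwardCaloric L t x - 2 * u t x) t :=
  ((h.ut_diff t ht x hx).hasDerivAt.mul (hasDerivAt_backwardCaloric_time L t x)).congr_deriv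
    (by ring)

lemma hasDerivAt_flux (h : IsSolOn p s₀ φ T s u) {t x : ℝ} (ht : t ∈ Ioc 0 T)
    (hx : x ∈ Ioo 0 (s t)) :
    HasDerivAt (flux L u t) (deriv (fun τ => u τ x) t * backwardCaloric L t x - 2 * u t x) x := by
  refine (((h.uxx_diff t ht x hx).hasDerivAt.mul (hasDerivAt_backwardCaloric L t x)).sub
    ((h.ux_diff t ht x hx).hasDerivAt.mul ((hasDerivAt_id' x).const_mul 2))).congr_deriv ?_
  rw [h.heat t ht x hx]
  ring

lemma integral_sub_eq_integral_flux (h : IsSolOn p s₀ φ T s u) {t z a : ℝ} (ht : 0 < t)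
    (htz : t ≤ z) (hzT : z ≤ T) (ha : 0 ≤ a) (has : a < s t) :
    ∫ x in a..s t, (u z x * backwardCaloric L z x - u t x * backwardCaloric L t x) =
      ∫ τ in t..z, (flux L u τ (s t) - flux L u τ a) := by
  have htime : ∀ τ ∈ Icc t z, τ ∈ Ioc 0 T :=
    fun τ hτ => ⟨ht.trans_le hτ.1, hτ.2.trans hzT⟩
  have hs_le : ∀ τ ∈ Icc t z, s t ≤ s τ := fun τ hτ =>
    h.monotoneOn_freeBoundary ⟨ht.le, htz.trans hzT⟩ (Ioc_subset_Icc_self (htime τ hτ)) hτ.1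
  have hspace : ∀ τ ∈ Icc t z, Ioo a (s t) ⊆ Ioo 0 (s τ) := fun τ hτ =>
    Ioo_subset_Ioo ha (hs_le τ hτ)
  have hclosed : Icc t z ×ˢ Icc a (s t) ⊆ {q | q.1 ∈ Ioc 0 T ∧ q.2 ∈ Icc 0 (s q.1)} :=
    fun q hq => ⟨htime _ hq.1, Icc_subset_Icc ha (hs_le _ hq.1) hq.2⟩
  have hopen : Icc t z ×ˢ Ioo a (s t) ⊆ {q | q.1 ∈ Ioc 0 T ∧ q.2 ∈ Ioo 0 (s q.1)} :=
    fun q hq => ⟨htime _ hq.1, hspace _ hq.1 hq.2⟩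
  have hq_cont := continuous_backwardCaloric L
  have hu : ContinuousOn (Function.uncurry u) (Icc t z ×ˢ Icc a (s t)) :=
    h.u_cont.mono fun q hq => ⟨Ioc_subset_Icc_self (hclosed hq).1, (hclosed hq).2⟩
  exact integral_sub_eq_integral_flux_sub (w := fun τ x => u τ x * backwardCaloric L τ x)
    (g := fun τ x => deriv (fun τ' => u τ' x) τ * backwardCaloric L τ x - 2 * u τ x) htz has
    (hu.mul hq_cont.continuousOn) ((h.continuousOn_flux L).mono hclosed)
    (((h.ut_cont.mono hopen).mul hq_cont.continuousOn).sub
      ((hu.mono (prod_mono_right Ioo_subset_Icc_self)).const_mul 2))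
    (fun τ hτ x hx => h.hasDerivAt_mul_backwardCaloric_time (htime τ hτ) (hspace τ hτ hx))
    fun τ hτ x hx => h.hasDerivAt_flux (htime τ hτ) (hspace τ hτ hx)

lemma neg_le_flux_free_boundary (h : IsSolOn p s₀ φ T s u) {t : ℝ} (ht : t ∈ Ioc 0 T)
    (hsL : s t ≤ L) : -(2 * L ^ 2 * deriv s t) ≤ flux L u t (s t) := by
  have hq := backwardCaloric_le_two_mul_sq ht.1.le (h.s_pos t (Ioc_subset_Icc_self ht)).le hsL
  calc -(2 * L ^ 2 * deriv s t)
      ≤ -(backwardCaloric L t (s t) * deriv s t) :=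
        neg_le_neg (mul_le_mul_of_nonneg_right hq (h.deriv_freeBoundary_nonneg ht))
    _ = flux L u t (s t) := by
        rw [flux, h.bc_free t ht, h.stefan t ht]
        ring

lemma flux_sqrt_nonpos (h : IsSolOn p s₀ φ T s u) {t : ℝ} (ht : t ∈ Ioc 0 T)
    (has : √(2 * t - L ^ 2) ≤ s t) : flux L u t √(2 * t - L ^ 2) ≤ 0 := by
  have hu : 0 ≤ u t √(2 * t - L ^ 2) :=
    h.u_nonneg t (Ioc_subset_Icc_self ht) _ ⟨Real.sqrt_nonneg _, has⟩
  have hq : 0 ≤ backwardCaloric L t √(2 * t - L ^ 2) := backwardCaloric_nonneg le_rfl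
  rcases le_or_gt (2 * t - L ^ 2) 0 with hneg | hpos
  · rw [Real.sqrt_eq_zero_of_nonpos hneg] at hu hq ⊢
    have hux : deriv (u t) 0 ≤ 0 := by
      rw [← neg_nonneg, h.bc_zero t ht]
      exact Real.rpow_nonneg hu p
    simpa only [flux, mul_zero, sub_zero] using mul_nonpos_of_nonpos_of_nonneg hux hq
  · have hq_zero : backwardCaloric L t √(2 * t - L ^ 2) = 0 :=
      (backwardCaloric_nonpos (Real.sqrt_nonneg _) le_rfl (sub_nonneg.1 hpos.le)).antisymm hq
    rw [flux, hq_zero, mul_zero, zero_sub]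
    exact neg_nonpos.2 (mul_nonneg hu (mul_nonneg zero_le_two (Real.sqrt_nonneg _)))

lemma continuousOn_mul_max_backwardCaloric (h : IsSolOn p s₀ φ T s u) (L : ℝ) :
    ContinuousOn (Function.uncurry fun t x => u t x * max (backwardCaloric L t x) 0)
      {q | q.1 ∈ Icc 0 T ∧ q.2 ∈ Icc 0 (s q.1)} :=
  h.u_cont.mul ((continuous_backwardCaloric L).max continuous_const).continuousOn

lemma intervalIntegrable_mul_max_backwardCaloric (h : IsSolOn p s₀ φ T s u) {t a b : ℝ}
    (ht : t ∈ Icc 0 T) (ha : a ∈ Icc 0 (s t)) (hb : b ∈ Icc 0 (s t)) :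
    IntervalIntegrable (fun x => u t x * max (backwardCaloric L t x) 0) volume a b :=
  ((h.continuousOn_mul_max_backwardCaloric L).comp (Continuous.prodMk_right t).continuousOn
    fun _ hx => ⟨ht, uIcc_subset_Icc ha hb hx⟩).intervalIntegrable

lemma intervalIntegrable_mul_backwardCaloric (h : IsSolOn p s₀ φ T s u) {t a b : ℝ}
    (ht : t ∈ Icc 0 T) (ha : a ∈ Icc 0 (s t)) (hb : b ∈ Icc 0 (s t)) :
    IntervalIntegrable (fun x => u t x * backwardCaloric L t x) volume a b :=
  ((h.continuousOn_apply ht).mono (uIcc_subset_Icc ha hb)).mul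
    ((continuous_backwardCaloric L).comp (Continuous.prodMk_right t)).continuousOn
    |>.intervalIntegrable

lemma continuousOn_weightedMass (h : IsSolOn p s₀ φ T s u) (L : ℝ) :
    ContinuousOn (weightedMass L s u) (Icc 0 T) :=
  continuousOn_intervalIntegral_of_continuousOn h.s_cont (fun t ht => (h.s_pos t ht).le)
    (h.continuousOn_mul_max_backwardCaloric L)

lemma weightedMass_nonneg (h : IsSolOn p s₀ φ T s u) {t : ℝ} (ht : t ∈ Icc 0 T) :
    0 ≤ weightedMass L s u t :=
  intervalIntegral.integral_nonneg (h.s_pos t ht).le fun x hx =>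
    mul_nonneg (h.u_nonneg t ht x hx) (le_max_right _ _)

lemma weightedMass_eq_zero (h : IsSolOn p s₀ φ T s u) {t : ℝ} (ht : t ∈ Icc 0 T)
    (hs : s t ≤ √(2 * t - L ^ 2)) : weightedMass L s u t = 0 :=
  integral_mul_max_backwardCaloric_eq_zero (u t) (h.s_pos t ht).le hs

lemma weightedMass_eq_integral_sqrt (h : IsSolOn p s₀ φ T s u) {t : ℝ} (ht : t ∈ Icc 0 T)
    (has : √(2 * t - L ^ 2) ≤ s t) :
    weightedMass L s u t = ∫ x in √(2 * t - L ^ 2)..s t, u t x * backwardCaloric L t x := by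
  have h0 : 0 ∈ Icc 0 (s t) := left_mem_Icc.2 (h.s_pos t ht).le
  have ha : √(2 * t - L ^ 2) ∈ Icc 0 (s t) := ⟨Real.sqrt_nonneg _, has⟩
  have hs : s t ∈ Icc 0 (s t) := right_mem_Icc.2 (h.s_pos t ht).le
  rw [weightedMass, ← intervalIntegral.integral_add_adjacent_intervals
      (h.intervalIntegrable_mul_max_backwardCaloric ht h0 ha)
      (h.intervalIntegrable_mul_max_backwardCaloric ht ha hs),
    integral_mul_max_backwardCaloric_eq_zero (u t) (Real.sqrt_nonneg _) le_rfl, zero_add]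
  refine intervalIntegral.integral_congr fun x hx => ?_
  rw [uIcc_of_le has] at hx
  simp only [max_eq_left (backwardCaloric_nonneg hx.1)]

lemma integral_mul_backwardCaloric_le_weightedMass (h : IsSolOn p s₀ φ T s u) {t a b : ℝ}
    (ht : t ∈ Icc 0 T) (ha : 0 ≤ a) (hab : a ≤ b) (hb : b ≤ s t) :
    ∫ x in a..b, u t x * backwardCaloric L t x ≤ weightedMass L s u t := by
  have hst : 0 ≤ s t := (h.s_pos t ht).le
  have ha' : a ∈ Icc 0 (s t) := ⟨ha, hab.trans hb⟩
  have hb' : b ∈ Icc 0 (s t) := ⟨ha.trans hab, hb⟩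
  calc ∫ x in a..b, u t x * backwardCaloric L t x
      ≤ ∫ x in a..b, u t x * max (backwardCaloric L t x) 0 :=
        intervalIntegral.integral_mono_on hab (h.intervalIntegrable_mul_backwardCaloric ht ha' hb')
          (h.intervalIntegrable_mul_max_backwardCaloric ht ha' hb') fun x hx =>
            mul_le_mul_of_nonneg_left (le_max_left _ _)
              (h.u_nonneg t ht x (Icc_subset_Icc ha hb hx))
    _ ≤ weightedMass L s u t :=
        intervalIntegral.integral_mono_interval ha hab hb
          ((ae_restrict_iff' measurableSet_Ioc).2 (ae_of_all _ fun x hx =>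
            mul_nonneg (h.u_nonneg t ht x (Ioc_subset_Icc_self hx)) (le_max_right _ _)))
          (h.intervalIntegrable_mul_max_backwardCaloric ht (left_mem_Icc.2 hst)
            (right_mem_Icc.2 hst))

lemma integral_flux_le_weightedMass_sub (h : IsSolOn p s₀ φ T s u) {t z : ℝ} (ht : 0 < t)
    (htz : t ≤ z) (hzT : z ≤ T) (has : √(2 * t - L ^ 2) < s t) :
    ∫ τ in t..z, (flux L u τ (s t) - flux L u τ √(2 * t - L ^ 2)) ≤
      weightedMass L s u z - weightedMass L s u t := by
  have htT : t ∈ Icc 0 T := ⟨ht.le, htz.trans hzT⟩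
  have hzT' : z ∈ Icc 0 T := ⟨ht.le.trans htz, hzT⟩
  have hsz : s t ≤ s z := h.monotoneOn_freeBoundary htT hzT' htz
  have ha : 0 ≤ √(2 * t - L ^ 2) := Real.sqrt_nonneg _
  rw [← h.integral_sub_eq_integral_flux ht htz hzT ha has, intervalIntegral.integral_sub
      (h.intervalIntegrable_mul_backwardCaloric hzT' ⟨ha, has.le.trans hsz⟩
        ⟨(h.s_pos t htT).le, hsz⟩)
      (h.intervalIntegrable_mul_backwardCaloric htT ⟨ha, has.le⟩
        (right_mem_Icc.2 (h.s_pos t htT).le)),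
    h.weightedMass_eq_integral_sqrt htT has.le]
  exact sub_le_sub_right
    (h.integral_mul_backwardCaloric_le_weightedMass hzT' ha has.le hsz) _

lemma hasDerivWithinAt_integral_flux_sub (h : IsSolOn p s₀ φ T s u) {t a b : ℝ}
    (ht : t ∈ Ioo 0 T) (ha : a ∈ Icc 0 (s t)) (hb : b ∈ Icc 0 (s t)) :
    HasDerivWithinAt (fun z => ∫ τ in t..z, (flux L u τ b - flux L u τ a))
      (flux L u t b - flux L u t a) (Ioi t) t := by
  have hflux : ∀ x ∈ Icc 0 (s t), ContinuousOn (fun τ => flux L u τ x) (Icc t T) := by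
    intro x hx
    refine (h.continuousOn_flux L).comp (f := fun τ => (τ, x)) (by fun_prop) fun τ hτ => ?_
    have hτT : τ ∈ Ioc 0 T := ⟨ht.1.trans_le hτ.1, hτ.2⟩
    exact ⟨hτT, hx.1, hx.2.trans
      (h.monotoneOn_freeBoundary (Ioo_subset_Icc_self ht) (Ioc_subset_Icc_self hτT) hτ.1)⟩
  exact hasDerivWithinAt_integral_Ioi_of_continuousOn ht.2 ((hflux b hb).sub (hflux a ha))

lemma monotoneOn_weightedMass_add (h : IsSolOn p s₀ φ T s u) (hsL : s T ≤ L) :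
    MonotoneOn (fun t => weightedMass L s u t + 2 * L ^ 2 * s t) (Icc 0 T) := by
  refine monotoneOn_of_exists_right_minorant
    ((h.continuousOn_weightedMass L).add (h.s_cont.const_mul _)) fun t ht => ?_
  have htT : t ∈ Icc 0 T := Ioo_subset_Icc_self ht
  have htT' : t ∈ Ioc 0 T := Ioo_subset_Ioc_self ht
  have hs : HasDerivWithinAt (fun z => 2 * L ^ 2 * s z) (2 * L ^ 2 * deriv s t) (Ioi t) t :=
    ((h.s_diff t htT').hasDerivAt.const_mul _).hasDerivWithinAt
  rcases lt_or_ge √(2 * t - L ^ 2) (s t) with has | has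
  · have hfree := h.neg_le_flux_free_boundary htT'
      ((h.monotoneOn_freeBoundary htT (right_mem_Icc.2 h.T_pos.le) ht.2.le).trans hsL)
    have hleft := h.flux_sqrt_nonpos htT' has.le
    refine ⟨_, _, (h.hasDerivWithinAt_integral_flux_sub (L := L) ht ⟨Real.sqrt_nonneg _, has.le⟩
      (right_mem_Icc.2 (h.s_pos t htT).le)).add hs, by linarith, ?_⟩
    filter_upwards [Ioc_mem_nhdsGT ht.2] with z hz
    have hmass := h.integral_flux_le_weightedMass_sub ht.1 hz.1.le hz.2 has
    simp only [Pi.add_apply, intervalIntegral.integral_same]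
    linarith
  · refine ⟨_, _, hs, by have := h.deriv_freeBoundary_nonneg htT'; positivity, ?_⟩
    filter_upwards [Ioc_mem_nhdsGT ht.2] with z hz
    have hmass := h.weightedMass_nonneg (L := L) ⟨ht.1.le.trans hz.1.le, hz.2⟩
    rw [h.weightedMass_eq_zero htT has]
    linarith

lemma sq_mul_integral_initial_le_weightedMass (h : IsSolOn p s₀ φ T s u) (L : ℝ) :
    L ^ 2 * ∫ x in (0 : ℝ)..s₀, φ x ≤ weightedMass L s u 0 := by
  have h0 : (0 : ℝ) ∈ Icc 0 T := left_mem_Icc.2 h.T_pos.le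
  have hs₀ : s 0 = s₀ := h.init_s
  have hu : ContinuousOn (u 0) (Icc 0 s₀) := hs₀ ▸ h.continuousOn_apply h0
  have hφ : IntervalIntegrable φ volume 0 s₀ :=
    (hu.congr fun x hx => (h.init x hx).symm).intervalIntegrable_of_Icc h.s₀_pos.le
  have hle := h.integral_mul_backwardCaloric_le_weightedMass (L := L) h0 le_rfl
    (h.s_pos 0 h0).le le_rfl
  have hint := h.intervalIntegrable_mul_backwardCaloric (L := L) h0
    (left_mem_Icc.2 (h.s_pos 0 h0).le) (right_mem_Icc.2 (h.s_pos 0 h0).le)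
  rw [hs₀] at hle hint
  refine le_trans ?_ hle
  rw [← intervalIntegral.integral_const_mul]
  refine intervalIntegral.integral_mono_on h.s₀_pos.le (hφ.const_mul _) hint fun x hx => ?_
  have hφx : 0 ≤ u 0 x := h.u_nonneg 0 h0 x (hs₀.symm ▸ hx)
  rw [← h.init x hx, mul_comm, backwardCaloric]
  exact mul_le_mul_of_nonneg_left (by nlinarith) hφx

lemma half_integral_initial_le_sub (h : IsSolOn p s₀ φ T s u)
    (hT : (s₀ + ∫ x in (0 : ℝ)..s₀, φ x) ^ 2 ≤ T) :
    (∫ x in (0 : ℝ)..s₀, φ x) / 2 ≤ s ((s₀ + ∫ x in (0 : ℝ)..s₀, φ x) ^ 2) - s 0 := by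
  have hA : 0 ≤ ∫ x in (0 : ℝ)..s₀, φ x := h.integral_initial_nonneg
  have hs₀ : 0 < s₀ := h.s₀_pos
  have hinit : s 0 = s₀ := h.init_s
  set A := ∫ x in (0 : ℝ)..s₀, φ x
  set L := s₀ + A with hL_def
  have hL : 0 < L := by positivity
  have h' : IsSolOn p s₀ φ (L ^ 2) s u := h.mono_time (by positivity) hT
  rcases le_or_gt L (s (L ^ 2)) with hsL | hsL
  · linarith [hL_def]
  have hmono := h'.monotoneOn_weightedMass_add hsL.le (left_mem_Icc.2 h'.T_pos.le)
    (right_mem_Icc.2 h'.T_pos.le) h'.T_pos.le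
  have hsqrt : √(2 * L ^ 2 - L ^ 2) = L := by rw [two_mul, add_sub_cancel_right, Real.sqrt_sq hL.le]
  have hfinal : weightedMass L s u (L ^ 2) = 0 :=
    h'.weightedMass_eq_zero (right_mem_Icc.2 h'.T_pos.le) (hsL.le.trans_eq hsqrt.symm)
  have hinitial : L ^ 2 * A ≤ weightedMass L s u 0 := h.sq_mul_integral_initial_le_weightedMass L
  have hscaled : L ^ 2 * A ≤ L ^ 2 * (2 * (s (L ^ 2) - s 0)) := by
    simp only [hfinal] at hmono
    linarith
  linarith [le_of_mul_le_mul_left hscaled (by positivity)]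

end IsSolOn

theorem stmt_12_general {p s₀ T : ℝ} {φ s : ℝ → ℝ} {u : ℝ → ℝ → ℝ} (hsol : IsSolOn p s₀ φ T s u)
    (hT : (s₀ + ∫ x in (0 : ℝ)..s₀, φ x) ^ 2 ≤ T) :
    ENNReal.ofReal (1 / 8 * (∫ x in (0 : ℝ)..s₀, φ x) ^ 3 /
        (s₀ + ∫ x in (0 : ℝ)..s₀, φ x) ^ 4) ≤
      ∫⁻ t in Ioc 0 T, ENNReal.ofReal ((deriv s t) ^ 3) := by
  have hA : 0 ≤ ∫ x in (0 : ℝ)..s₀, φ x := hsol.integral_initial_nonneg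
  have hs₀ : 0 < s₀ := hsol.s₀_pos
  have hgrowth := hsol.half_integral_initial_le_sub hT
  set A := ∫ x in (0 : ℝ)..s₀, φ x
  set L := s₀ + A
  calc ENNReal.ofReal (1 / 8 * A ^ 3 / L ^ 4)
      ≤ ENNReal.ofReal ((s (L ^ 2) - s 0) ^ (2 + 1) / (L ^ 2 - 0) ^ 2) := by
        refine ENNReal.ofReal_le_ofReal ?_
        calc 1 / 8 * A ^ 3 / L ^ 4 = (A / 2) ^ 3 / (L ^ 2 - 0) ^ 2 := by ring
          _ ≤ (s (L ^ 2) - s 0) ^ 3 / (L ^ 2 - 0) ^ 2 := by gcongr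
    _ ≤ ∫⁻ t in Ioc 0 (L ^ 2), ENNReal.ofReal ((deriv s t) ^ 3) :=
        ofReal_sub_pow_div_le_lintegral_ofReal_deriv_pow (by positivity)
          (hsol.s_cont.mono (Icc_subset_Icc_right hT))
          (fun t ht => hsol.s_diff t (Ioc_subset_Ioc_right hT ht))
          (fun t ht => hsol.deriv_freeBoundary_nonneg (Ioc_subset_Ioc_right hT ht)) 2
    _ ≤ ∫⁻ t in Ioc 0 T, ENNReal.ofReal ((deriv s t) ^ 3) :=
        lintegral_mono_set (Ioc_subset_Ioc_right hT)

/-- Lemma 3.1: lower bound for `∫₀^∞ s'(t)³ dt` for global-in-time solutions. -/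
theorem stmt_12 (p : ℝ) (hp : 1 < p) (s₀ : ℝ) (φ : ℝ → ℝ) (hW : memW s₀ φ)
    (s : ℝ → ℝ) (u : ℝ → ℝ → ℝ) (hsol : IsGlobalSol p s₀ φ s u) :
    ENNReal.ofReal (1 / 128 * π ^ 2 * (∫ x in (0:ℝ)..s₀, φ x) ^ 3 /
        (s₀ + ∫ x in (0:ℝ)..s₀, φ x) ^ 4) ≤
      ∫⁻ t in Ioi (0:ℝ), ENNReal.ofReal ((deriv s t) ^ 3) := by
  have hA : 0 ≤ ∫ x in (0 : ℝ)..s₀, φ x := (hsol 1 one_pos).integral_initial_nonneg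
  have hs₀ : 0 < s₀ := hW.1
  have hconst : 1 / 128 * π ^ 2 ≤ 1 / 8 := by nlinarith [Real.pi_pos, Real.pi_le_four]
  refine le_trans (ENNReal.ofReal_le_ofReal ?_)
    ((stmt_12_general (hsol _ (by positivity)) le_rfl).trans
      (lintegral_mono_set Ioc_subset_Ioi_self))
  gcongr
end
end
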